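/- arXiv:1704.04932 — 3 statements merged into one kernel-verified Lean document; each statement's English description precedes it below -/
import Mathlib

section
/- Let n ≥ 1, β > 0, and let f : ℝⁿ → ℝ be continuous and bounded. Define the heat kernel G_s(x) = (2πs)^{−n/2} exp(−‖x‖²/(2s)) for s > 0, and define the local entropy function u(x,t) = −β⁻¹ log( ∫_{ℝⁿ} G_{β⁻¹ t}(x−y) exp(−β f(y)) dy ) for t > 0. Then u is smooth on ℝⁿ × (0,∞), solves the viscous Hamilton–Jacobi equation ∂u/∂t = −(1/2)‖∇u‖² + (β⁻¹/2)Δu there, and u(x,t) → f(x) as t → 0⁺ for every x ∈ ℝⁿ. -/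
open Real MeasureTheory

/-- The spatial Laplacian: sum of second derivatives along coordinate directions. -/
noncomputable def laplacian {n : ℕ} (f : EuclideanSpace ℝ (Fin n) → ℝ)
    (x : EuclideanSpace ℝ (Fin n)) : ℝ :=
  ∑ i : Fin n, fderiv ℝ (fun y => fderiv ℝ f y (EuclideanSpace.single i 1)) x
    (EuclideanSpace.single i 1)

/-- The heat kernel `G_s(x) = (2πs)^{-n/2} exp(-‖x‖²/(2s))`. -/
noncomputable def heatKernel {n : ℕ} (s : ℝ) (x : EuclideanSpace ℝ (Fin n)) : ℝ :=
  (2 * Real.pi * s) ^ (-(n : ℝ) / 2) * Real.exp (-‖x‖ ^ 2 / (2 * s))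

/-- The local entropy `u(x,t) = -β⁻¹ log( ∫ G_{β⁻¹ t}(x-y) exp(-β f(y)) dy )`. -/
noncomputable def localEntropy {n : ℕ} (β : ℝ) (f : EuclideanSpace ℝ (Fin n) → ℝ)
    (x : EuclideanSpace ℝ (Fin n)) (t : ℝ) : ℝ :=
  -β⁻¹ * Real.log (∫ y, heatKernel (β⁻¹ * t) (x - y) * Real.exp (-β * f y))

/-!
With `v = exp (-β u)` (Cole–Hopf) the viscous Hamilton–Jacobi equation becomes, in the time
variable `s = β⁻¹ t`, the heat equation `∂ₛ v = Δ v / 2`, solved by convolving `P = exp (-β f)`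
with the heat kernel. Expanding the square in `‖x - y‖² / (2 s)` writes this convolution as
`heatKernel s x` times the Laplace transform of `P` at the natural parameters `(x / s, 1 / (2 s))`
of the Gaussian, where `P` is paired with the forms `(b, a) ↦ ⟪y, b⟫ - a ‖y‖²`. Differentiating a
Laplace transform multiplies its density by such a form, which yields smoothness by induction and
all derivatives explicitly. For the initial condition, a fixed Gaussian is split off the kernel
and absorbed into `P`; the remaining kernels form an approximate identity acting on an integrable
function.
-/

universe u

section LaplaceTransform

variable {X : Type*} {W F : Type u} [MeasurableSpace X] {μ : Measure X}
  [NormedAddCommGroup W] [NormedSpace ℝ W] [NormedAddCommGroup F] [NormedSpace ℝ F]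
  {ℓ : X → W →L[ℝ] ℝ} {P : X → F} {w : W}

/-- The Laplace transform of the vector-valued density `P` along the family of linear forms `ℓ`,
i.e. the partition function of the exponential family with natural parameter `w`. -/
noncomputable def laplaceTransform (μ : Measure X) (ℓ : X → W →L[ℝ] ℝ) (P : X → F) (w : W) : F :=
  ∫ y, exp (ℓ y w) • P y ∂μ

/-- The density `P` stays integrable against `exp (ℓ y w)` after a small exponential loss in
`‖ℓ y‖`, which dominates the integrand of `laplaceTransform` on a ball around `w`. -/
def HasExpMoment (μ : Measure X) (ℓ : X → W →L[ℝ] ℝ) (P : X → F) (w : W) : Prop :=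
  ∃ r > 0, Integrable (fun y => exp (ℓ y w + r * ‖ℓ y‖) • P y) μ

lemma apply_le_add_mul_opNorm (L : W →L[ℝ] ℝ) {v w : W} {r : ℝ} (hvw : ‖v - w‖ ≤ r) :
    L v ≤ L w + r * ‖L‖ := by
  have hle : L (v - w) ≤ r * ‖L‖ := by
    grw [← hvw, mul_comm]
    exact (le_abs_self _).trans (L.le_opNorm _)
  rw [map_sub] at hle
  linarith

lemma le_inv_mul_exp {r : ℝ} (hr : 0 < r) (x : ℝ) : x ≤ r⁻¹ * exp (r * x) := by
  rw [le_inv_mul_iff₀ hr]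
  linarith [add_one_le_exp (r * x)]

lemma hasFDerivAt_exp_apply_smul (L : W →L[ℝ] ℝ) (c : F) (w : W) :
    HasFDerivAt (fun v => exp (L v) • c) (exp (L w) • L.smulRight c) w := by
  refine (L.hasFDerivAt.exp.smul_const c).congr_fderiv ?_
  ext
  simp [smul_smul]

namespace HasExpMoment

lemma aestronglyMeasurable (hP : HasExpMoment μ ℓ P w) (hℓ : AEStronglyMeasurable ℓ μ) :
    AEStronglyMeasurable P μ := by
  obtain ⟨r, -, hint⟩ := hP
  have hexp : AEStronglyMeasurable (fun y => exp (-(ℓ y w + r * ‖ℓ y‖))) μ := by fun_prop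
  refine (hexp.smul hint.1).congr (.of_forall fun y => ?_)
  simp [smul_smul, ← exp_add]

lemma integrable (hP : HasExpMoment μ ℓ P w) (hℓ : AEStronglyMeasurable ℓ μ) :
    Integrable (fun y => exp (ℓ y w) • P y) μ := by
  have hPm := hP.aestronglyMeasurable hℓ
  obtain ⟨r, hr, hint⟩ := hP
  refine hint.mono (by fun_prop) (.of_forall fun y => ?_)
  simp only [norm_smul, norm_eq_abs, abs_exp]
  gcongr
  exact le_add_of_nonneg_right (by positivity)

lemma smulRight (hP : HasExpMoment μ ℓ P w) (hℓ : AEStronglyMeasurable ℓ μ) :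
    HasExpMoment μ ℓ (fun y => (ℓ y).smulRight (P y)) w := by
  have hPm := hP.aestronglyMeasurable hℓ
  obtain ⟨r, hr, hint⟩ := hP
  have hm : AEStronglyMeasurable (fun y => (ℓ y).smulRight (P y)) μ :=
    (ContinuousLinearMap.smulRightL ℝ W F).continuous₂.comp_aestronglyMeasurable (hℓ.prodMk hPm)
  refine ⟨r / 2, half_pos hr, (hint.norm.const_mul (r / 2)⁻¹).mono' (by fun_prop)
    (.of_forall fun y => ?_)⟩
  have hsplit : exp (ℓ y w + r / 2 * ‖ℓ y‖) * exp (r / 2 * ‖ℓ y‖) = exp (ℓ y w + r * ‖ℓ y‖) := by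
    rw [← exp_add]
    ring_nf
  simp only [norm_smul, ContinuousLinearMap.norm_smulRight_apply, norm_eq_abs, abs_exp]
  calc exp (ℓ y w + r / 2 * ‖ℓ y‖) * (‖ℓ y‖ * ‖P y‖)
      ≤ exp (ℓ y w + r / 2 * ‖ℓ y‖) * ((r / 2)⁻¹ * exp (r / 2 * ‖ℓ y‖) * ‖P y‖) := by
        gcongr
        exact le_inv_mul_exp (half_pos hr) _
    _ = (r / 2)⁻¹ * (exp (ℓ y w + r * ‖ℓ y‖) * ‖P y‖) := by
        rw [← hsplit]
        ring

lemma hasFDerivAt_laplaceTransform (hP : HasExpMoment μ ℓ P w) (hℓ : AEStronglyMeasurable ℓ μ) :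
    HasFDerivAt (laplaceTransform μ ℓ P)
      (laplaceTransform μ ℓ (fun y => (ℓ y).smulRight (P y)) w) w := by
  have hPm := hP.aestronglyMeasurable hℓ
  have hP' := hP.smulRight hℓ
  have hP'm := (hP'.integrable hℓ).1
  obtain ⟨r, hr, hint⟩ := id hP'
  refine hasFDerivAt_integral_of_dominated_of_fderiv_le (Metric.closedBall_mem_nhds w hr)
    (.of_forall fun v => by fun_prop) (hP.integrable hℓ) hP'm (.of_forall fun y v hv => ?_)
    hint.norm (.of_forall fun y v _ => hasFDerivAt_exp_apply_smul (ℓ y) (P y) v)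
  simp only [norm_smul, norm_eq_abs, abs_exp]
  gcongr
  exact apply_le_add_mul_opNorm (ℓ y) (mem_closedBall_iff_norm.1 hv)

lemma fderiv_laplaceTransform_apply (hP : HasExpMoment μ ℓ P w) (hℓ : AEStronglyMeasurable ℓ μ)
    (v : W) :
    fderiv ℝ (laplaceTransform μ ℓ P) w v = laplaceTransform μ ℓ (fun y => ℓ y v • P y) w := by
  rw [(hP.hasFDerivAt_laplaceTransform hℓ).fderiv, laplaceTransform,
    ContinuousLinearMap.integral_apply ((hP.smulRight hℓ).integrable hℓ)]
  rfl

end HasExpMoment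

lemma contDiffOn_laplaceTransform {s : Set W} (hs : IsOpen s) (hℓ : AEStronglyMeasurable ℓ μ)
    (hP : ∀ w ∈ s, HasExpMoment μ ℓ P w) :
    ContDiffOn ℝ (⊤ : ℕ∞) (laplaceTransform μ ℓ P) s := by
  refine contDiffOn_infty.2 fun k => ?_
  induction k generalizing F with
  | zero =>
    exact contDiffOn_zero.2 fun w hw =>
      ((hP w hw).hasFDerivAt_laplaceTransform hℓ).continuousAt.continuousWithinAt
  | succ k ih =>
    have hderiv (w) (hw : w ∈ s) := (hP w hw).hasFDerivAt_laplaceTransform hℓ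
    rw [Nat.cast_succ, contDiffOn_succ_iff_fderiv_of_isOpen hs]
    exact ⟨fun w hw => (hderiv w hw).differentiableAt.differentiableWithinAt, by simp,
      (ih fun w hw => (hP w hw).smulRight hℓ).congr fun w hw => (hderiv w hw).fderiv⟩

end LaplaceTransform

section GaussianExponent

variable {E : Type*} [NormedAddCommGroup E] [InnerProductSpace ℝ E]

/-- The exponent of a Gaussian in the variable `y`, as a linear form `(b, a) ↦ ⟪y, b⟫ - a ‖y‖²` in
its natural parameters. -/
noncomputable def gaussianExponent (y : E) : E × ℝ →L[ℝ] ℝ :=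
  (innerSL ℝ y).comp (.fst ℝ E ℝ) - ‖y‖ ^ 2 • .snd ℝ E ℝ

lemma gaussianExponent_apply (y : E) (w : E × ℝ) :
    gaussianExponent y w = inner ℝ y w.1 - ‖y‖ ^ 2 * w.2 := by
  simp [gaussianExponent]

lemma continuous_gaussianExponent : Continuous (gaussianExponent (E := E)) := by
  unfold gaussianExponent
  fun_prop

lemma aestronglyMeasurable_gaussianExponent [MeasurableSpace E] [OpensMeasurableSpace E]
    [SecondCountableTopology E] {μ : Measure E} : AEStronglyMeasurable gaussianExponent μ :=
  continuous_gaussianExponent.comp_aestronglyMeasurable aestronglyMeasurable_id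

lemma norm_gaussianExponent_le (y : E) : ‖gaussianExponent y‖ ≤ 2 * (1 + ‖y‖ ^ 2) := by
  refine ContinuousLinearMap.opNorm_le_bound _ (by positivity) fun w => ?_
  have hy : ‖y‖ + ‖y‖ ^ 2 ≤ 2 * (1 + ‖y‖ ^ 2) := by nlinarith [sq_nonneg (‖y‖ - 1)]
  calc ‖gaussianExponent y w‖ = ‖inner ℝ y w.1 - ‖y‖ ^ 2 * w.2‖ := by rw [gaussianExponent_apply]
    _ ≤ ‖inner ℝ y w.1‖ + ‖‖y‖ ^ 2 * w.2‖ := norm_sub_le _ _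
    _ ≤ ‖y‖ * ‖w‖ + ‖y‖ ^ 2 * ‖w‖ := by
      grw [norm_inner_le_norm, norm_fst_le, norm_mul, norm_snd_le, norm_pow, norm_norm]
    _ ≤ 2 * (1 + ‖y‖ ^ 2) * ‖w‖ := by grw [← add_mul, hy]

lemma gaussianExponent_le (y : E) {w : E × ℝ} (hw : 0 < w.2) :
    gaussianExponent y w ≤ ‖w.1‖ ^ 2 / (2 * w.2) - w.2 / 2 * ‖y‖ ^ 2 := by
  have hinner : inner ℝ y w.1 ≤ ‖y‖ * ‖w.1‖ := real_inner_le_norm _ _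
  have hsquare : ‖w.1‖ ^ 2 / (2 * w.2) - ‖w.1‖ * ‖y‖ + w.2 / 2 * ‖y‖ ^ 2
      = (‖w.1‖ - w.2 * ‖y‖) ^ 2 / (2 * w.2) := by
    field_simp
    ring
  have hnonneg : 0 ≤ (‖w.1‖ - w.2 * ‖y‖) ^ 2 / (2 * w.2) := by positivity
  rw [gaussianExponent_apply]
  linarith

end GaussianExponent

lemma integrable_exp_neg_mul_sq_norm {V : Type*} [NormedAddCommGroup V] [InnerProductSpace ℝ V]
    [FiniteDimensional ℝ V] [MeasurableSpace V] [BorelSpace V] {a : ℝ} (ha : 0 < a) :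
    Integrable fun y : V => exp (-a * ‖y‖ ^ 2) := by
  have hint := GaussianFourier.integrable_cexp_neg_mul_sq_norm_add (V := V) (b := a)
    (by simpa using ha) 0 0
  refine hint.re.congr (.of_forall fun y => ?_)
  beta_reduce
  rw [zero_mul, add_zero, ← Complex.ofReal_neg, ← Complex.ofReal_pow, ← Complex.ofReal_mul]
  exact Complex.exp_ofReal_re _

section GaussianIntegrable

variable {E F : Type u} [NormedAddCommGroup E] [MeasurableSpace E]
  [NormedAddCommGroup F] [NormedSpace ℝ F] {μ : Measure E} {P : E → F}

/-- Integrability against every centred Gaussian: the initial data for which the heat equation has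
a solution for all positive times. -/
def GaussianIntegrable (P : E → F) (μ : Measure E) : Prop :=
  ∀ a > 0, Integrable (fun y => exp (-a * ‖y‖ ^ 2) • P y) μ

namespace GaussianIntegrable

lemma aestronglyMeasurable [OpensMeasurableSpace E] (hP : GaussianIntegrable P μ) :
    AEStronglyMeasurable P μ := by
  have hexp : AEStronglyMeasurable (fun y : E => exp (1 * ‖y‖ ^ 2)) μ := by fun_prop
  refine (hexp.smul (hP 1 one_pos).1).congr (.of_forall fun y => ?_)
  simp [smul_smul, ← exp_add]

variable [InnerProductSpace ℝ E]

lemma of_norm_le_const [FiniteDimensional ℝ E] [BorelSpace E] {C : ℝ}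
    (hP : AEStronglyMeasurable P volume) (hC : ∀ y, ‖P y‖ ≤ C) : GaussianIntegrable P volume :=
  fun _ ha => (integrable_exp_neg_mul_sq_norm ha).smul_bdd C hP (.of_forall hC)

variable [OpensMeasurableSpace E] [SecondCountableTopology E] {w : E × ℝ}

lemma hasExpMoment (hP : GaussianIntegrable P μ) (hw : 0 < w.2) :
    HasExpMoment μ gaussianExponent P w := by
  have hPm := hP.aestronglyMeasurable
  have hℓ := aestronglyMeasurable_gaussianExponent (μ := μ)
  refine ⟨w.2 / 8, by positivity, ((hP (w.2 / 4) (by positivity)).norm.const_mul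
    (exp (‖w.1‖ ^ 2 / (2 * w.2) + w.2 / 4))).mono' (by fun_prop) (.of_forall fun y => ?_)⟩
  simp only [norm_smul, norm_eq_abs, abs_exp, ← mul_assoc, ← exp_add]
  have hexponent : gaussianExponent y w + w.2 / 8 * ‖gaussianExponent y‖
      ≤ ‖w.1‖ ^ 2 / (2 * w.2) + w.2 / 4 + -(w.2 / 4) * ‖y‖ ^ 2 := by
    grw [gaussianExponent_le y hw, norm_gaussianExponent_le]
    exact le_of_eq (by ring)
  gcongr

lemma inner_smul (hP : GaussianIntegrable P μ) (v : E) :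
    GaussianIntegrable (fun y => inner ℝ y v • P y) μ := by
  intro a ha
  have hℓ := aestronglyMeasurable_gaussianExponent (μ := μ)
  have hint := ((hP.hasExpMoment (w := (0, a)) ha).smulRight hℓ).integrable hℓ
  simpa [gaussianExponent_apply, mul_comm] using hint.apply_continuousLinearMap (v, 0)

lemma contDiffOn_gaussianLaplace (hP : GaussianIntegrable P μ) :
    ContDiffOn ℝ (⊤ : ℕ∞) (laplaceTransform μ gaussianExponent P) (Set.univ ×ˢ Set.Ioi 0) :=
  contDiffOn_laplaceTransform (isOpen_univ.prod isOpen_Ioi)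
    aestronglyMeasurable_gaussianExponent fun _ hw => hP.hasExpMoment hw.2

lemma differentiableAt_laplaceTransform (hP : GaussianIntegrable P μ) (hw : 0 < w.2) :
    DifferentiableAt ℝ (laplaceTransform μ gaussianExponent P) w :=
  ((hP.hasExpMoment hw).hasFDerivAt_laplaceTransform
    aestronglyMeasurable_gaussianExponent).differentiableAt

lemma fderiv_laplaceTransform_prodMk (hP : GaussianIntegrable P μ) (hw : 0 < w.2) (v : E) (c : ℝ) :
    fderiv ℝ (laplaceTransform μ gaussianExponent P) w (v, c)
      = laplaceTransform μ gaussianExponent (fun y => inner ℝ y v • P y) w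
        - c • laplaceTransform μ gaussianExponent (fun y => ‖y‖ ^ 2 • P y) w := by
  have hderiv := (hP.hasExpMoment hw).fderiv_laplaceTransform_apply
    aestronglyMeasurable_gaussianExponent
  have hfst : fderiv ℝ (laplaceTransform μ gaussianExponent P) w (v, 0)
      = laplaceTransform μ gaussianExponent (fun y => inner ℝ y v • P y) w := by
    simp only [hderiv, gaussianExponent_apply, mul_zero, sub_zero]
  have hsnd : fderiv ℝ (laplaceTransform μ gaussianExponent P) w (0, 1)
      = -laplaceTransform μ gaussianExponent (fun y => ‖y‖ ^ 2 • P y) w := by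
    simp only [hderiv, gaussianExponent_apply, inner_zero_right, mul_one, zero_sub, neg_smul,
      laplaceTransform, smul_neg, integral_neg]
  have hdir : (v, c) = (v, (0 : ℝ)) + c • ((0 : E), (1 : ℝ)) := by simp
  rw [hdir, map_add, map_smul, hfst, hsnd, smul_neg, sub_eq_add_neg]

end GaussianIntegrable

end GaussianIntegrable

section HeatKernel

variable {n : ℕ}

lemma heatKernel_pos {s : ℝ} (hs : 0 < s) (x : EuclideanSpace ℝ (Fin n)) : 0 < heatKernel s x := by
  unfold heatKernel
  positivity

lemma hasFDerivAt_heatKernel (s : ℝ) (x : EuclideanSpace ℝ (Fin n)) :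
    HasFDerivAt (heatKernel s) (-(s⁻¹ * heatKernel s x) • innerSL ℝ x) x := by
  have hexponent := (hasStrictFDerivAt_norm_sq x).hasFDerivAt.neg.mul_const (2 * s)⁻¹
  refine (hexponent.exp.const_mul ((2 * π * s) ^ (-(n : ℝ) / 2))).congr_fderiv ?_
  ext v
  simp only [heatKernel, smul_apply, neg_apply,
    smul_eq_mul, nsmul_eq_mul, Pi.neg_apply, div_eq_mul_inv]
  push_cast
  ring

lemma hasDerivAt_heatKernel {s : ℝ} (hs : 0 < s) (x : EuclideanSpace ℝ (Fin n)) :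
    HasDerivAt (fun r => heatKernel r x)
      ((‖x‖ ^ 2 / (2 * s ^ 2) - n / (2 * s)) * heatKernel s x) s := by
  have hlin (c : ℝ) : HasDerivAt (fun r => c * r) c s := by
    simpa using (hasDerivAt_id s).const_mul c
  have hpow := (hlin (2 * π)).rpow_const (p := -(n : ℝ) / 2) (.inl (by positivity))
  have hexp := (((hlin 2).inv (by positivity)).const_mul (-‖x‖ ^ 2)).exp
  refine (hpow.mul hexp).congr_deriv ?_
  rw [rpow_sub_one (by positivity)]
  simp only [heatKernel, div_eq_mul_inv, Pi.inv_apply]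
  field_simp
  ring

lemma contDiffOn_heatKernel :
    ContDiffOn ℝ (⊤ : ℕ∞) (fun p : EuclideanSpace ℝ (Fin n) × ℝ => heatKernel p.2 p.1)
      (Set.univ ×ˢ Set.Ioi 0) := by
  intro p hp
  have hpos : 0 < p.2 := hp.2
  have hlin (c : ℝ) : ContDiffAt ℝ (⊤ : ℕ∞) (fun p : EuclideanSpace ℝ (Fin n) × ℝ => c * p.2) p :=
    contDiffAt_const.mul contDiffAt_snd
  have hnorm : ContDiffAt ℝ (⊤ : ℕ∞) (fun p : EuclideanSpace ℝ (Fin n) × ℝ => ‖p.1‖ ^ 2) p :=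
    contDiffAt_fst.norm_sq ℝ
  exact (((hlin (2 * π)).rpow_const_of_ne (by positivity)).mul
    (hnorm.neg.div (hlin 2) (by positivity)).exp).contDiffWithinAt

/-- The natural parameters of the Gaussian with mean `x` and variance `s`. -/
noncomputable def gaussianParam (x : EuclideanSpace ℝ (Fin n)) (s : ℝ) :
    EuclideanSpace ℝ (Fin n) × ℝ :=
  (s⁻¹ • x, (2 * s)⁻¹)

lemma gaussianParam_snd_pos {s : ℝ} (hs : 0 < s) (x : EuclideanSpace ℝ (Fin n)) :
    0 < (gaussianParam x s).2 :=
  inv_pos.2 (mul_pos two_pos hs)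

lemma hasFDerivAt_gaussianParam (x : EuclideanSpace ℝ (Fin n)) (s : ℝ) :
    HasFDerivAt (fun z => gaussianParam z s) (s⁻¹ • .inl ℝ (EuclideanSpace ℝ (Fin n)) ℝ) x := by
  have hderiv := ((hasFDerivAt_id (𝕜 := ℝ) x).const_smul s⁻¹).prodMk (hasFDerivAt_const (2 * s)⁻¹ x)
  refine hderiv.congr_fderiv ?_
  ext <;> simp

lemma hasDerivAt_gaussianParam (x : EuclideanSpace ℝ (Fin n)) {s : ℝ} (hs : s ≠ 0) :
    HasDerivAt (gaussianParam x) (-(s ^ 2)⁻¹ • (x, 2⁻¹)) s := by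
  have hinv := hasDerivAt_inv hs
  refine ((hinv.smul_const x).prodMk (hinv.const_mul 2⁻¹)).congr_deriv (by simp [mul_comm])
    |>.congr_of_eventuallyEq (.of_forall fun r => by simp [gaussianParam, mul_comm])

lemma contDiffOn_gaussianParam : ContDiffOn ℝ (⊤ : ℕ∞)
    (fun p : EuclideanSpace ℝ (Fin n) × ℝ => gaussianParam p.1 p.2) (Set.univ ×ˢ Set.Ioi 0) :=
  ((contDiffOn_snd.inv fun _ hp => (ne_of_gt hp.2)).smul contDiffOn_fst).prodMk
    ((contDiffOn_const.mul contDiffOn_snd).inv fun _ hp => (mul_pos two_pos hp.2).ne')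

lemma heatKernel_sub (s : ℝ) (x y : EuclideanSpace ℝ (Fin n)) :
    heatKernel s (x - y) = heatKernel s x * exp (gaussianExponent y (gaussianParam x s)) := by
  have hexponent : -‖x - y‖ ^ 2 / (2 * s)
      = -‖x‖ ^ 2 / (2 * s) + gaussianExponent y (gaussianParam x s) := by
    rw [gaussianExponent_apply, gaussianParam, norm_sub_sq_real, real_inner_smul_right,
      real_inner_comm]
    ring
  simp only [heatKernel, hexponent, exp_add, ← mul_assoc]

end HeatKernel

section HeatExtension

variable {n : ℕ} {P : EuclideanSpace ℝ (Fin n) → ℝ}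

/-- The convolution of the initial datum `P` with the heat kernel: the solution at time `s` of the
heat equation `∂ₛ u = Δ u / 2` with initial value `P`. -/
noncomputable def heatExtension (P : EuclideanSpace ℝ (Fin n) → ℝ) (x : EuclideanSpace ℝ (Fin n))
    (s : ℝ) : ℝ :=
  ∫ y, heatKernel s (x - y) * P y

lemma heatExtension_eq_mul_laplaceTransform (P : EuclideanSpace ℝ (Fin n) → ℝ)
    (x : EuclideanSpace ℝ (Fin n)) (s : ℝ) :
    heatExtension P x s
      = heatKernel s x * laplaceTransform volume gaussianExponent P (gaussianParam x s) := by
  simp only [heatExtension, laplaceTransform, heatKernel_sub, mul_assoc, integral_const_mul,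
    smul_eq_mul]

namespace GaussianIntegrable

variable {s : ℝ} (hP : GaussianIntegrable P volume) (hs : 0 < s)
include hP

lemma inner_mul (v : EuclideanSpace ℝ (Fin n)) :
    GaussianIntegrable (fun y => inner ℝ y v * P y) volume :=
  hP.inner_smul v

lemma contDiffOn_heatExtension :
    ContDiffOn ℝ (⊤ : ℕ∞) (fun p : EuclideanSpace ℝ (Fin n) × ℝ => heatExtension P p.1 p.2)
      (Set.univ ×ˢ Set.Ioi 0) := by
  have hmaps : Set.MapsTo (fun p : EuclideanSpace ℝ (Fin n) × ℝ => gaussianParam p.1 p.2)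
      (Set.univ ×ˢ Set.Ioi 0) (Set.univ ×ˢ Set.Ioi 0) :=
    fun p hp => ⟨trivial, gaussianParam_snd_pos hp.2 p.1⟩
  exact (contDiffOn_heatKernel.mul
    (hP.contDiffOn_gaussianLaplace.comp contDiffOn_gaussianParam hmaps)).congr
    fun p _ => heatExtension_eq_mul_laplaceTransform P p.1 p.2

include hs

lemma contDiff_heatExtension : ContDiff ℝ (⊤ : ℕ∞) fun x => heatExtension P x s :=
  contDiffOn_univ.1 (hP.contDiffOn_heatExtension.comp (by fun_prop : ContDiff ℝ (⊤ : ℕ∞)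
    fun x : EuclideanSpace ℝ (Fin n) => (x, s)).contDiffOn fun _ _ => ⟨trivial, hs⟩)

lemma integrable_heatKernel_mul (x : EuclideanSpace ℝ (Fin n)) :
    Integrable fun y => heatKernel s (x - y) * P y := by
  have hint := ((hP.hasExpMoment (gaussianParam_snd_pos hs x)).integrable
    aestronglyMeasurable_gaussianExponent).const_mul (heatKernel s x)
  simpa only [heatKernel_sub, mul_assoc, smul_eq_mul] using hint

lemma heatExtension_pos (hpos : ∀ y, 0 < P y) (x : EuclideanSpace ℝ (Fin n)) :
    0 < heatExtension P x s := by
  have hpos' (y) : 0 < heatKernel s (x - y) * P y := mul_pos (heatKernel_pos hs _) (hpos y)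
  rw [heatExtension, integral_pos_iff_support_of_nonneg (fun y => (hpos' y).le)
    (hP.integrable_heatKernel_mul hs x), Function.support_eq_univ fun y => (hpos' y).ne']
  exact Measure.measure_univ_pos.2 (NeZero.ne _)

lemma fderiv_heatExtension_apply (x v : EuclideanSpace ℝ (Fin n)) :
    fderiv ℝ (fun z => heatExtension P z s) x v
      = s⁻¹ * (heatExtension (fun y => inner ℝ y v * P y) x s
        - inner ℝ x v * heatExtension P x s) := by
  have hw := gaussianParam_snd_pos hs x
  have hlaplace := (hP.differentiableAt_laplaceTransform hw).hasFDerivAt.comp x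
    (hasFDerivAt_gaussianParam x s)
  have hprod := ((hasFDerivAt_heatKernel s x).mul hlaplace).congr_of_eventuallyEq
    (.of_forall fun z => heatExtension_eq_mul_laplaceTransform P z s)
  rw [hprod.fderiv, ContinuousLinearMap.comp_smul]
  simp only [heatExtension_eq_mul_laplaceTransform, hP.fderiv_laplaceTransform_prodMk hw,
    add_apply, smul_apply, ContinuousLinearMap.comp_apply, ContinuousLinearMap.inl_apply,
    coe_innerSL_apply, Function.comp_apply, smul_eq_mul, zero_mul, sub_zero]
  ring

lemma hasDerivAt_heatExtension (x : EuclideanSpace ℝ (Fin n)) :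
    HasDerivAt (heatExtension P x)
      ((2 * s ^ 2)⁻¹ * (heatExtension (fun y => ‖y‖ ^ 2 * P y) x s
        - 2 * heatExtension (fun y => inner ℝ y x * P y) x s
        + (‖x‖ ^ 2 - n * s) * heatExtension P x s)) s := by
  have hw := gaussianParam_snd_pos hs x
  have hlaplace := (hP.differentiableAt_laplaceTransform hw).hasFDerivAt.comp_hasDerivAt s
    (hasDerivAt_gaussianParam x hs.ne')
  refine (((hasDerivAt_heatKernel hs x).mul hlaplace).congr_of_eventuallyEq
    (.of_forall fun r => heatExtension_eq_mul_laplaceTransform P x r)).congr_deriv ?_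
  rw [map_smul, hP.fderiv_laplaceTransform_prodMk hw]
  simp only [heatExtension_eq_mul_laplaceTransform, Function.comp_apply, smul_eq_mul]
  field_simp
  ring

lemma fderiv_fderiv_heatExtension_apply (x v : EuclideanSpace ℝ (Fin n)) :
    fderiv ℝ (fun z => fderiv ℝ (fun z => heatExtension P z s) z v) x v
      = (s ^ 2)⁻¹ * (heatExtension (fun y => inner ℝ y v * (inner ℝ y v * P y)) x s
        - 2 * inner ℝ x v * heatExtension (fun y => inner ℝ y v * P y) x s
        + (inner ℝ x v ^ 2 - s * ‖v‖ ^ 2) * heatExtension P x s) := by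
  have hQ := hP.inner_mul v
  have hdiff {Q : EuclideanSpace ℝ (Fin n) → ℝ} (hQ : GaussianIntegrable Q volume) :=
    ((hQ.contDiff_heatExtension hs).differentiable (by simp) x).hasFDerivAt
  have hinner : HasFDerivAt (fun z => inner ℝ z v) (innerSL ℝ v) x :=
    (innerSL ℝ v).hasFDerivAt.congr_of_eventuallyEq (.of_forall fun z => real_inner_comm v z)
  have hderiv := ((hdiff hQ).sub (hinner.mul (hdiff hP))).const_mul s⁻¹
  simp only [hP.fderiv_heatExtension_apply hs]
  refine (congrArg (· v) hderiv.fderiv).trans ?_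
  simp only [hP.fderiv_heatExtension_apply hs, hQ.fderiv_heatExtension_apply hs, add_apply,
    sub_apply, smul_apply, smul_eq_mul, coe_innerSL_apply, real_inner_self_eq_norm_sq]
  field_simp
  ring

end GaussianIntegrable

lemma heatExtension_const_mul (c : ℝ) (P : EuclideanSpace ℝ (Fin n) → ℝ)
    (x : EuclideanSpace ℝ (Fin n)) (s : ℝ) :
    heatExtension (fun y => c * P y) x s = c * heatExtension P x s := by
  simp only [heatExtension, mul_left_comm _ c, integral_const_mul]

lemma heatExtension_finsetSum {ι : Type*} (I : Finset ι) {Q : ι → EuclideanSpace ℝ (Fin n) → ℝ}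
    (hQ : ∀ i ∈ I, GaussianIntegrable (Q i) volume) {s : ℝ} (hs : 0 < s)
    (x : EuclideanSpace ℝ (Fin n)) :
    heatExtension (fun y => ∑ i ∈ I, Q i y) x s = ∑ i ∈ I, heatExtension (Q i) x s := by
  simp only [heatExtension, Finset.mul_sum]
  exact integral_finsetSum I fun i hi => (hQ i hi).integrable_heatKernel_mul hs x

namespace GaussianIntegrable

variable {s : ℝ} (hP : GaussianIntegrable P volume) (hs : 0 < s)
include hP hs

lemma heatExtension_inner_mul (x z : EuclideanSpace ℝ (Fin n)) :
    heatExtension (fun y => inner ℝ y z * P y) x s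
      = ∑ i, z i * heatExtension (fun y => inner ℝ y (EuclideanSpace.single i 1) * P y) x s := by
  have hcoord (y) : inner ℝ y z * P y
      = ∑ i, inner ℝ y (z i • EuclideanSpace.single i (1 : ℝ)) * P y := by
    rw [PiLp.inner_apply, Finset.sum_mul]
    simp only [inner_smul_right, EuclideanSpace.inner_single_right, RCLike.inner_apply,
      conj_trivial, one_mul]
  simp only [hcoord]
  rw [heatExtension_finsetSum _ (fun i _ => hP.inner_mul _) hs]
  simp only [inner_smul_right, mul_assoc, heatExtension_const_mul]

lemma heatExtension_norm_sq_mul (x : EuclideanSpace ℝ (Fin n)) :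
    heatExtension (fun y => ‖y‖ ^ 2 * P y) x s
      = ∑ i : Fin n, heatExtension (fun y => inner ℝ y (EuclideanSpace.single i 1) *
        (inner ℝ y (EuclideanSpace.single i 1) * P y)) x s := by
  have hcoord (y) : ‖y‖ ^ 2 * P y = ∑ i, inner ℝ y (EuclideanSpace.single i (1 : ℝ)) *
      (inner ℝ y (EuclideanSpace.single i (1 : ℝ)) * P y) := by
    rw [EuclideanSpace.real_norm_sq_eq, Finset.sum_mul]
    simp only [EuclideanSpace.inner_single_right, conj_trivial, one_mul, sq, mul_assoc]
  simp only [hcoord]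
  exact heatExtension_finsetSum _ (fun i _ => (hP.inner_mul _).inner_mul _) hs x

lemma hasDerivAt_heatExtension_half_laplacian (x : EuclideanSpace ℝ (Fin n)) :
    HasDerivAt (heatExtension P x) (1 / 2 * laplacian (fun z => heatExtension P z s) x) s := by
  refine (hP.hasDerivAt_heatExtension hs x).congr_deriv ?_
  rw [hP.heatExtension_inner_mul hs, hP.heatExtension_norm_sq_mul hs,
    EuclideanSpace.real_norm_sq_eq]
  simp only [laplacian, hP.fderiv_fderiv_heatExtension_apply hs,
    EuclideanSpace.inner_single_right, conj_trivial, one_mul, PiLp.norm_single, norm_one,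
    one_pow, mul_one, ← Finset.mul_sum, Finset.sum_add_distrib, Finset.sum_sub_distrib,
    ← Finset.sum_mul, mul_assoc, Finset.sum_const, Finset.card_univ, Fintype.card_fin, nsmul_eq_mul]
  field_simp

end GaussianIntegrable

end HeatExtension

section InitialCondition

variable {n : ℕ} {P : EuclideanSpace ℝ (Fin n) → ℝ}

lemma heatKernel_one (z : EuclideanSpace ℝ (Fin n)) :
    heatKernel 1 z = (2 * π) ^ (-(n : ℝ) / 2) * exp (-(1 / 2) * ‖z‖ ^ 2) := by
  rw [heatKernel, mul_one, mul_one]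
  congr 2
  ring

lemma integral_heatKernel_one : ∫ z : EuclideanSpace ℝ (Fin n), heatKernel 1 z = 1 := by
  simp_rw [heatKernel_one]
  rw [integral_const_mul, GaussianFourier.integral_rexp_neg_mul_sq_norm (by norm_num),
    finrank_euclideanSpace_fin, show π / (1 / 2) = 2 * π by ring,
    ← rpow_add (by positivity), neg_div, neg_add_cancel, rpow_zero]

lemma tendsto_norm_pow_mul_heatKernel_one (k : ℕ) :
    Filter.Tendsto (fun z : EuclideanSpace ℝ (Fin n) => ‖z‖ ^ k * heatKernel 1 z)
      (Bornology.cobounded _) (nhds 0) := by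
  have hnorm : Filter.Tendsto (fun z : EuclideanSpace ℝ (Fin n) => ‖z‖)
      (Bornology.cobounded _) (Filter.cocompact ℝ) :=
    tendsto_norm_cobounded_atTop.mono_right atTop_le_cocompact
  have hdecay := ((tendsto_rpow_abs_mul_exp_neg_mul_sq_cocompact one_half_pos k).comp
    hnorm).const_mul ((2 * π) ^ (-(n : ℝ) / 2))
  rw [mul_zero] at hdecay
  refine hdecay.congr fun z => ?_
  rw [Function.comp_apply, abs_norm, rpow_natCast, heatKernel_one, mul_left_comm]

lemma heatKernel_eq_mul_exp {s : ℝ} (hs : 0 < s) (hs' : s < 1) (z : EuclideanSpace ℝ (Fin n)) :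
    heatKernel s z
      = (1 - s) ^ (-(n : ℝ) / 2) * (heatKernel (s / (1 - s)) z * exp (-(1 / 2) * ‖z‖ ^ 2)) := by
  have h1s : 0 < 1 - s := sub_pos.2 hs'
  have hexponent : -‖z‖ ^ 2 / (2 * s)
      = -‖z‖ ^ 2 / (2 * (s / (1 - s))) + -(1 / 2) * ‖z‖ ^ 2 := by
    field_simp
    ring
  have hfactor : 2 * π * s = (1 - s) * (2 * π * (s / (1 - s))) := by field_simp
  rw [heatKernel, heatKernel, hexponent, exp_add, hfactor, mul_rpow h1s.le (by positivity)]
  ring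

lemma heatKernel_eq_smul {s : ℝ} (hs : 0 < s) (z : EuclideanSpace ℝ (Fin n)) :
    heatKernel s z = (√s)⁻¹ ^ n * heatKernel 1 ((√s)⁻¹ • z) := by
  have hexponent : -‖(√s)⁻¹ • z‖ ^ 2 / (2 * 1) = -‖z‖ ^ 2 / (2 * s) := by
    rw [norm_smul, mul_pow, norm_inv, inv_pow, norm_eq_abs, sq_abs, sq_sqrt hs.le]
    field_simp
  have hfactor : (√s)⁻¹ ^ n = s ^ (-(n : ℝ) / 2) := by
    rw [inv_pow, sqrt_eq_rpow, ← rpow_natCast, ← rpow_mul hs.le, ← rpow_neg hs.le]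
    ring_nf
  rw [heatKernel, heatKernel, hexponent, hfactor, mul_rpow two_pi_pos.le hs.le, mul_one]
  ring

lemma tendsto_heatExtension_of_integrable (hP : Integrable P) {x : EuclideanSpace ℝ (Fin n)}
    (hPx : ContinuousAt P x) :
    Filter.Tendsto (heatExtension P x) (nhdsWithin 0 (Set.Ioi 0)) (nhds (P x)) := by
  have hsqrt : Filter.Tendsto (√·) (nhdsWithin 0 (Set.Ioi 0)) (nhdsWithin 0 (Set.Ioi 0)) :=
    tendsto_nhdsWithin_iff.2 ⟨(continuous_sqrt.tendsto' 0 0 sqrt_zero).mono_left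
      nhdsWithin_le_nhds, eventually_nhdsWithin_of_forall fun _ => sqrt_pos.2⟩
  have hpeak := tendsto_integral_comp_smul_smul_of_integrable'
    (fun z => (heatKernel_pos one_pos z).le) integral_heatKernel_one
    (tendsto_norm_pow_mul_heatKernel_one _) hP hPx
  refine (hpeak.comp hsqrt.inv_tendsto_nhdsGT_zero).congr' ?_
  filter_upwards [self_mem_nhdsWithin] with s hs
  simp [heatExtension, heatKernel_eq_smul hs, mul_assoc]

lemma heatExtension_eq_mul_heatExtension (P : EuclideanSpace ℝ (Fin n) → ℝ)
    (x : EuclideanSpace ℝ (Fin n)) {s : ℝ} (hs : 0 < s) (hs' : s < 1) :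
    heatExtension P x s = (1 - s) ^ (-(n : ℝ) / 2) *
      heatExtension (fun y => exp (-(1 / 2) * ‖x - y‖ ^ 2) * P y) x (s / (1 - s)) := by
  simp only [heatExtension, heatKernel_eq_mul_exp hs hs', mul_assoc, integral_const_mul]

namespace GaussianIntegrable

lemma integrable_exp_neg_sq_norm_sub_mul (hP : GaussianIntegrable P volume)
    (x : EuclideanSpace ℝ (Fin n)) : Integrable fun y => exp (-(1 / 2) * ‖x - y‖ ^ 2) * P y := by
  have hint := hP.integrable_heatKernel_mul one_pos x
  simp only [heatKernel_one, mul_assoc] at hint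
  exact (integrable_const_mul_iff (isUnit_iff_ne_zero.2 (by positivity)) _).1 hint

lemma tendsto_heatExtension (hP : GaussianIntegrable P volume) {x : EuclideanSpace ℝ (Fin n)}
    (hPx : ContinuousAt P x) :
    Filter.Tendsto (heatExtension P x) (nhdsWithin 0 (Set.Ioi 0)) (nhds (P x)) := by
  have hzero : Filter.Tendsto (fun s : ℝ => s) (nhdsWithin 0 (Set.Ioi 0)) (nhds 0) :=
    nhdsWithin_le_nhds
  have hsub : Filter.Tendsto (fun s : ℝ => 1 - s) (nhdsWithin 0 (Set.Ioi 0)) (nhds 1) := by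
    simpa using hzero.const_sub 1
  have hlt : ∀ᶠ s : ℝ in nhdsWithin 0 (Set.Ioi 0), s < 1 := hzero.eventually_lt_const one_pos
  have htime : Filter.Tendsto (fun s : ℝ => s / (1 - s)) (nhdsWithin 0 (Set.Ioi 0))
      (nhdsWithin 0 (Set.Ioi 0)) := by
    have hquot : Filter.Tendsto (fun s : ℝ => s / (1 - s)) (nhdsWithin 0 (Set.Ioi 0))
        (nhds (0 / 1)) := hzero.div hsub one_ne_zero
    rw [zero_div] at hquot
    refine tendsto_nhdsWithin_iff.2 ⟨hquot, ?_⟩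
    filter_upwards [self_mem_nhdsWithin, hlt] with s hs hs'
    exact div_pos hs (sub_pos.2 hs')
  have hfactor := hsub.rpow_const (p := -(n : ℝ) / 2) (.inl one_ne_zero)
  have hexp : ContinuousAt (fun y => exp (-(1 / 2) * ‖x - y‖ ^ 2)) x := by fun_prop
  have hlim := hfactor.mul ((tendsto_heatExtension_of_integrable
    (hP.integrable_exp_neg_sq_norm_sub_mul x) (hexp.mul hPx)).comp htime)
  rw [one_rpow, one_mul, sub_self, norm_zero, zero_pow two_ne_zero, mul_zero, exp_zero,
    one_mul] at hlim
  refine hlim.congr' ?_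
  filter_upwards [self_mem_nhdsWithin, hlt] with s hs hs'
  exact (heatExtension_eq_mul_heatExtension P x hs hs').symm

end GaussianIntegrable

end InitialCondition

section ColeHopf

variable {n : ℕ} {v : EuclideanSpace ℝ (Fin n) → ℝ}

lemma norm_gradient_sq (g : EuclideanSpace ℝ (Fin n) → ℝ) (x : EuclideanSpace ℝ (Fin n)) :
    ‖gradient g x‖ ^ 2 = ∑ i, (fderiv ℝ g x (EuclideanSpace.single i 1)) ^ 2 := by
  have hcoord (i) : gradient g x i = fderiv ℝ g x (EuclideanSpace.single i 1) := by
    rw [← InnerProductSpace.toDual_symm_apply, EuclideanSpace.inner_single_right, one_mul]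
    rfl
  simp only [EuclideanSpace.real_norm_sq_eq, hcoord]

lemma norm_gradient_const_mul_sq (c : ℝ) (g : EuclideanSpace ℝ (Fin n) → ℝ)
    (x : EuclideanSpace ℝ (Fin n)) :
    ‖gradient (fun z => c * g z) x‖ ^ 2 = c ^ 2 * ‖gradient g x‖ ^ 2 := by
  have hfderiv : fderiv ℝ (fun z => c * g z) x = c • fderiv ℝ g x :=
    congrFun (fderiv_const_smul_field c) x
  simp only [norm_gradient_sq, hfderiv, smul_apply, smul_eq_mul, mul_pow, Finset.mul_sum]

lemma laplacian_const_mul (c : ℝ) (g : EuclideanSpace ℝ (Fin n) → ℝ)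
    (x : EuclideanSpace ℝ (Fin n)) :
    laplacian (fun z => c * g z) x = c * laplacian g x := by
  have hfderiv (h : EuclideanSpace ℝ (Fin n) → ℝ) (z) :
      fderiv ℝ (fun z => c * h z) z = c • fderiv ℝ h z :=
    congrFun (fderiv_const_smul_field c) z
  simp only [laplacian, hfderiv, smul_apply, smul_eq_mul, Finset.mul_sum]

lemma laplacian_log_add_norm_gradient_log_sq (hv : ContDiff ℝ 2 v) (hv0 : ∀ z, v z ≠ 0)
    (x : EuclideanSpace ℝ (Fin n)) :
    laplacian (fun z => log (v z)) x + ‖gradient (fun z => log (v z)) x‖ ^ 2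
      = laplacian v x / v x := by
  have hdiff : Differentiable ℝ v := hv.differentiable two_ne_zero
  have hdiff' (e) : Differentiable ℝ fun z => fderiv ℝ v z e :=
    ((hv.fderiv_right (m := 1) le_rfl).clm_apply contDiff_const).differentiable one_ne_zero
  have hfderiv (z e) : fderiv ℝ (fun z => log (v z)) z e = (v z)⁻¹ * fderiv ℝ v z e := by
    rw [fderiv.log (hdiff z) (hv0 z), smul_apply, smul_eq_mul]
  have hfderiv' (e) : fderiv ℝ (fun z => (v z)⁻¹ * fderiv ℝ v z e) x e
      = (v x)⁻¹ * fderiv ℝ (fun z => fderiv ℝ v z e) x e - ((v x)⁻¹ * fderiv ℝ v x e) ^ 2 := by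
    have hprod := ((hasDerivAt_inv (hv0 x)).comp_hasFDerivAt x (hdiff x).hasFDerivAt).mul
      (hdiff' e x).hasFDerivAt
    refine (congrArg (· e) hprod.fderiv).trans ?_
    simp only [add_apply, smul_apply, smul_eq_mul, Function.comp_apply]
    ring
  simp only [laplacian, norm_gradient_sq, hfderiv, hfderiv', ← Finset.sum_add_distrib,
    sub_add_cancel, ← Finset.mul_sum, div_eq_inv_mul]

lemma deriv_neg_mul_log_of_heat_equation {v : EuclideanSpace ℝ (Fin n) → ℝ → ℝ} {c t : ℝ}
    {x : EuclideanSpace ℝ (Fin n)} (hspace : ContDiff ℝ 2 fun z => v z (c * t))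
    (hv0 : ∀ z, v z (c * t) ≠ 0)
    (hheat : HasDerivAt (v x) (1 / 2 * laplacian (fun z => v z (c * t)) x) (c * t)) :
    deriv (fun r => -c * log (v x (c * r))) t
      = -(1 / 2) * ‖gradient (fun z => -c * log (v z (c * t))) x‖ ^ 2
        + c / 2 * laplacian (fun z => -c * log (v z (c * t))) x := by
  have hlog := laplacian_log_add_norm_gradient_log_sq hspace hv0 x
  have htime : HasDerivAt (fun r => c * r) c t := by simpa using (hasDerivAt_id t).const_mul c
  refine (((hheat.comp t htime).log (hv0 x)).const_mul (-c)).deriv.trans ?_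
  rw [norm_gradient_const_mul_sq, laplacian_const_mul, Function.comp_apply, mul_div_right_comm,
    mul_div_assoc, ← hlog]
  ring

end ColeHopf

theorem stmt_1_general (n : ℕ) (β : ℝ) (hβ : 0 < β) (f : EuclideanSpace ℝ (Fin n) → ℝ)
    (hf : GaussianIntegrable (fun y => exp (-β * f y)) volume) :
    ContDiffOn ℝ (⊤ : ℕ∞)
      (fun p : EuclideanSpace ℝ (Fin n) × ℝ => localEntropy β f p.1 p.2)
      (Set.univ ×ˢ Set.Ioi 0) ∧
    (∀ x t, 0 < t →
      deriv (localEntropy β f x) t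
        = -(1/2) * ‖gradient (fun y => localEntropy β f y t) x‖ ^ 2
          + (β⁻¹ / 2) * laplacian (fun y => localEntropy β f y t) x) ∧
    (∀ x, ContinuousAt f x → Filter.Tendsto (fun t => localEntropy β f x t)
      (nhdsWithin 0 (Set.Ioi 0)) (nhds (f x))) := by
  have htime {t : ℝ} (ht : 0 < t) : 0 < β⁻¹ * t := mul_pos (inv_pos.2 hβ) ht
  have hpos {s : ℝ} (hs : 0 < s) (x) : 0 < heatExtension (fun y => exp (-β * f y)) x s :=
    hf.heatExtension_pos hs (fun _ => exp_pos _) x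
  refine ⟨?smooth, fun x t ht => ?equation, fun x hfx => ?initial⟩
  case smooth =>
    have hscale : ContDiff ℝ (⊤ : ℕ∞) fun p : EuclideanSpace ℝ (Fin n) × ℝ => (p.1, β⁻¹ * p.2) := by
      fun_prop
    exact contDiffOn_const.mul ((hf.contDiffOn_heatExtension.comp hscale.contDiffOn
      fun _ hp => ⟨trivial, htime hp.2⟩).log fun p hp => (hpos (htime hp.2) p.1).ne')
  case equation =>
    exact deriv_neg_mul_log_of_heat_equation
      (contDiff_infty.1 (hf.contDiff_heatExtension (htime ht)) 2)
      (fun z => (hpos (htime ht) z).ne') (hf.hasDerivAt_heatExtension_half_laplacian (htime ht) x)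
  case initial =>
    have hscale : Filter.Tendsto (β⁻¹ * ·) (nhdsWithin 0 (Set.Ioi 0))
        (nhdsWithin 0 (Set.Ioi 0)) :=
      tendsto_nhdsWithin_iff.2 ⟨((continuous_const_mul β⁻¹).tendsto' 0 0 (mul_zero _)).mono_left
        nhdsWithin_le_nhds, eventually_nhdsWithin_of_forall fun _ => htime⟩
    have hlim := (((hf.tendsto_heatExtension (hfx.const_mul (-β)).rexp).comp hscale).log
      (exp_pos _).ne').const_mul (-β⁻¹)
    rwa [log_exp, neg_mul, neg_mul, mul_neg, neg_neg, inv_mul_cancel_left₀ hβ.ne'] at hlim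

/-- The local entropy is smooth on `ℝⁿ × (0,∞)`, solves the viscous Hamilton–Jacobi
equation there, and converges to `f(x)` as `t → 0⁺`. -/
theorem stmt_1 (n : ℕ) (hn : 1 ≤ n) (β : ℝ) (hβ : 0 < β)
    (f : EuclideanSpace ℝ (Fin n) → ℝ) (hf : Continuous f)
    (hfb : ∃ M, ∀ x, |f x| ≤ M) :
    ContDiffOn ℝ (⊤ : ℕ∞)
      (fun p : EuclideanSpace ℝ (Fin n) × ℝ => localEntropy β f p.1 p.2)
      (Set.univ ×ˢ Set.Ioi 0) ∧
    (∀ x t, 0 < t →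
      deriv (localEntropy β f x) t
        = -(1/2) * ‖gradient (fun y => localEntropy β f y t) x‖ ^ 2
          + (β⁻¹ / 2) * laplacian (fun y => localEntropy β f y t) x) ∧
    (∀ x, Filter.Tendsto (fun t => localEntropy β f x t)
      (nhdsWithin 0 (Set.Ioi 0)) (nhds (f x))) := by
  obtain ⟨M, hM⟩ := hfb
  have hbound (y) : ‖exp (-β * f y)‖ ≤ exp (β * M) := by
    rw [norm_eq_abs, abs_exp, exp_le_exp, neg_mul_comm]
    exact mul_le_mul_of_nonneg_left ((neg_le_abs _).trans (hM y)) hβ.le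
  obtain ⟨hsmooth, hequation, hinitial⟩ := stmt_1_general n β hβ f
    (.of_norm_le_const (by fun_prop) hbound)
  exact ⟨hsmooth, hequation, fun x => hinitial x hf.continuousAt⟩
end

section
/- Let n ≥ 1, β > 0, t > 0, and let f : ℝⁿ → ℝ be continuously differentiable, bounded, with bounded gradient. Define u(x,t) = −β⁻¹ log( ∫_{ℝⁿ} G_{β⁻¹ t}(x−y) exp(−β f(y)) dy ) where G_s(x) = (2πs)^{−n/2} exp(−‖x‖²/(2s)). For each x let ρ₂(y; x) = Z₂(x)⁻¹ exp(−β f(x−y) − (β/(2t))‖y‖²), where Z₂(x) = ∫_{ℝⁿ} exp(−β f(x−y) − (β/(2t))‖y‖²) dy. Then the spatial gradient of u satisfies ∇u(x,t) = ∫_{ℝⁿ} ∇f(x−y) ρ₂(y; x) dy for every x ∈ ℝⁿ. -/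
open Real MeasureTheory

/-- The normalizing constant `Z₂(x) = ∫ exp(-β f(x-y) - (β/(2t))‖y‖²) dy`. -/
noncomputable def Z2 {n : ℕ} (β t : ℝ) (f : EuclideanSpace ℝ (Fin n) → ℝ)
    (x : EuclideanSpace ℝ (Fin n)) : ℝ :=
  ∫ y, Real.exp (-β * f (x - y) - (β / (2 * t)) * ‖y‖ ^ 2)

/-- The Gibbs density `ρ₂(y; x) = Z₂(x)⁻¹ exp(-β f(x-y) - (β/(2t))‖y‖²)`. -/
noncomputable def rho2 {n : ℕ} (β t : ℝ) (f : EuclideanSpace ℝ (Fin n) → ℝ)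
    (x y : EuclideanSpace ℝ (Fin n)) : ℝ :=
  (Z2 β t f x)⁻¹ * Real.exp (-β * f (x - y) - (β / (2 * t)) * ‖y‖ ^ 2)

/-!
After the substitution `y ↦ x - y` the convolution `G_{β⁻¹ t} * exp(-β f)` is a constant multiple
of `Z₂`, so `∇u = -β⁻¹ ∇Z₂ / Z₂`, and differentiating `Z₂` under the integral sign produces the
Gibbs average. The domination comes from a competition of growth rates: `f` has bounded gradient, so
it grows at most linearly, and the Gaussian weight has exponential moments of every order.
-/

section Gradient

open scoped Topology

variable {E : Type*} [NormedAddCommGroup E] [InnerProductSpace ℝ E] [CompleteSpace E]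

theorem hasGradientAt_comp_of_hasDerivAt {φ : ℝ → ℝ} {φ' : ℝ} {g : E → ℝ} {g' x : E}
    (hφ : HasDerivAt φ φ' (g x)) (hg : HasGradientAt g g' x) :
    HasGradientAt (fun z ↦ φ (g z)) (φ' • g') x := by
  rw [hasGradientAt_iff_hasFDerivAt, map_smulₛₗ, conj_trivial]
  exact hφ.comp_hasFDerivAt x hg.hasFDerivAt

theorem hasGradientAt_integral_of_dominated_of_gradient_le {α : Type*} [MeasurableSpace α]
    {μ : Measure α} {F : E → α → ℝ} {F' : E → α → E} {x₀ : E} {s : Set E} {bound : α → ℝ}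
    (hs : s ∈ 𝓝 x₀) (hF_meas : ∀ᶠ x in 𝓝 x₀, AEStronglyMeasurable (F x) μ)
    (hF_int : Integrable (F x₀) μ) (hF'_meas : AEStronglyMeasurable (F' x₀) μ)
    (h_bound : ∀ᵐ a ∂μ, ∀ x ∈ s, ‖F' x a‖ ≤ bound a) (bound_integrable : Integrable bound μ)
    (h_diff : ∀ᵐ a ∂μ, ∀ x ∈ s, HasGradientAt (F · a) (F' x a) x) :
    HasGradientAt (fun x ↦ ∫ a, F x a ∂μ) (∫ a, F' x₀ a ∂μ) x₀ := by
  let D : E → α → StrongDual ℝ E := fun x a ↦ InnerProductSpace.toDual ℝ E (F' x a)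
  have hD_meas : AEStronglyMeasurable (D x₀) μ :=
    (InnerProductSpace.toDual ℝ E).continuous.comp_aestronglyMeasurable hF'_meas
  have hD_bound : ∀ᵐ a ∂μ, ∀ x ∈ s, ‖D x a‖ ≤ bound a := by
    simpa only [D, LinearIsometryEquiv.norm_map] using h_bound
  have hF'_int : Integrable (F' x₀) μ :=
    bound_integrable.mono' hF'_meas (h_bound.mono fun a ha ↦ ha x₀ (mem_of_mem_nhds hs))
  have hD_int : Integrable (D x₀) μ :=
    bound_integrable.mono' hD_meas (hD_bound.mono fun a ha ↦ ha x₀ (mem_of_mem_nhds hs))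
  have integral_D : ∫ a, D x₀ a ∂μ = InnerProductSpace.toDual ℝ E (∫ a, F' x₀ a ∂μ) := by
    ext v
    rw [ContinuousLinearMap.integral_apply hD_int, InnerProductSpace.toDual_apply_apply,
      real_inner_comm, ← integral_inner hF'_int]
    simp only [D, InnerProductSpace.toDual_apply_apply, real_inner_comm]
  rw [hasGradientAt_iff_hasFDerivAt, ← integral_D]
  exact hasFDerivAt_integral_of_dominated_of_fderiv_le hs hF_meas hF_int hD_meas hD_bound
    bound_integrable (h_diff.mono fun a ha x hx ↦ (ha x hx).hasFDerivAt)

theorem norm_image_sub_le_of_norm_hasGradientAt_le {g : E → ℝ} {g' : E → E} {K : ℝ}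
    (hg : ∀ z, HasGradientAt g (g' z) z) (hK : ∀ z, ‖g' z‖ ≤ K) (z w : E) :
    ‖g z - g w‖ ≤ K * ‖z - w‖ :=
  convex_univ.norm_image_sub_le_of_norm_hasFDerivWithin_le
    (fun v _ ↦ (hg v).hasFDerivAt.hasFDerivWithinAt)
    (fun v _ ↦ by simpa only [LinearIsometryEquiv.norm_map] using hK v)
    (Set.mem_univ w) (Set.mem_univ z)

theorem measurable_of_forall_hasGradientAt [MeasurableSpace E] [BorelSpace E] {g : E → ℝ}
    {g' : E → E} (hg : ∀ z, HasGradientAt g (g' z) z) : Measurable g' := by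
  rw [← gradient_eq hg]
  borelize (StrongDual ℝ E)
  exact (InnerProductSpace.toDual ℝ E).symm.continuous.measurable.comp (measurable_fderiv ℝ g)

end Gradient

section GibbsIntegral

variable {E : Type*} [NormedAddCommGroup E] [InnerProductSpace ℝ E] [CompleteSpace E]
  {g : E → ℝ} {g' : E → E} {K : ℝ}

theorem exp_comp_sub_sub_le (hg : ∀ z, HasGradientAt g (g' z) z) (hK : ∀ z, ‖g' z‖ ≤ K)
    {x z : E} (hz : z ∈ Metric.ball x 1) (y : E) (c : ℝ) :
    exp (g (z - y) - c) ≤ exp (g x + K) * exp (K * ‖y‖ - c) := by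
  have K_nonneg : 0 ≤ K := (norm_nonneg _).trans (hK 0)
  have growth : g (z - y) - g x ≤ K * (1 + ‖y‖) :=
    calc g (z - y) - g x ≤ K * ‖z - y - x‖ :=
          (le_abs_self _).trans (norm_image_sub_le_of_norm_hasGradientAt_le hg hK _ _)
      _ ≤ K * (1 + ‖y‖) := by
          gcongr
          rw [sub_right_comm]
          exact (norm_sub_le _ _).trans (by gcongr; exact (mem_ball_iff_norm.1 hz).le)
  rw [← exp_add]
  gcongr
  linarith

theorem hasGradientAt_exp_comp_sub_sub {v y z : E} (hg : HasGradientAt g v (z - y)) (c : ℝ) :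
    HasGradientAt (fun x ↦ exp (g (x - y) - c)) (exp (g (z - y) - c) • v) z := by
  have hshift : HasGradientAt (fun x ↦ g (x - y)) v z :=
    (hasFDerivAt_comp_sub y).2 hg.hasFDerivAt
  exact hasGradientAt_comp_of_hasDerivAt (φ := fun r ↦ exp (r - c))
    (by simpa using ((hasDerivAt_id (g (z - y))).sub_const c).exp) hshift

variable [MeasurableSpace E] [BorelSpace E] {μ : Measure E} {W : E → ℝ}

theorem integrable_exp_comp_sub_sub (hg : ∀ z, HasGradientAt g (g' z) z) (hK : ∀ z, ‖g' z‖ ≤ K)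
    (hW : Integrable (fun y ↦ exp (K * ‖y‖ - W y)) μ) (x : E) :
    Integrable (fun y ↦ exp (g (x - y) - W y)) μ := by
  have g_continuous : Continuous g := continuous_iff_continuousAt.2 fun z ↦ (hg z).continuousAt
  have integrand_eq (y : E) :
      exp (g (x - y) - W y) = exp (g (x - y) - K * ‖y‖) * exp (K * ‖y‖ - W y) := by
    rw [← exp_add, sub_add_sub_cancel]
  have factor_continuous : Continuous fun y ↦ exp (g (x - y) - K * ‖y‖) := by fun_prop
  have integrand_meas : AEStronglyMeasurable (fun y ↦ exp (g (x - y) - W y)) μ := by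
    simp only [integrand_eq]
    exact factor_continuous.measurable.aestronglyMeasurable.mul hW.aestronglyMeasurable
  refine (hW.const_mul (exp (g x + K))).mono' integrand_meas (.of_forall fun y ↦ ?_)
  rw [norm_of_nonneg (exp_pos _).le]
  exact exp_comp_sub_sub_le hg hK (Metric.mem_ball_self one_pos) y (W y)

theorem hasGradientAt_integral_exp_comp_sub_sub [SecondCountableTopology E]
    (hg : ∀ z, HasGradientAt g (g' z) z) (hK : ∀ z, ‖g' z‖ ≤ K)
    (hW : Integrable (fun y ↦ exp (K * ‖y‖ - W y)) μ) (x : E) :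
    HasGradientAt (fun x ↦ ∫ y, exp (g (x - y) - W y) ∂μ)
      (∫ y, exp (g (x - y) - W y) • g' (x - y) ∂μ) x := by
  have integrand_int := integrable_exp_comp_sub_sub hg hK hW
  have g'_meas : Measurable fun y ↦ g' (x - y) :=
    (measurable_of_forall_hasGradientAt hg).comp (measurable_const.sub measurable_id)
  refine hasGradientAt_integral_of_dominated_of_gradient_le
    (F' := fun z y ↦ exp (g (z - y) - W y) • g' (z - y))
    (bound := fun y ↦ exp (g x + K) * exp (K * ‖y‖ - W y) * K)
    (Metric.ball_mem_nhds x one_pos) (.of_forall fun z ↦ (integrand_int z).aestronglyMeasurable)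
    (integrand_int x) ((integrand_int x).aestronglyMeasurable.smul g'_meas.aestronglyMeasurable)
    (.of_forall fun y z hz ↦ ?_) ((hW.const_mul _).mul_const K)
    (.of_forall fun y z _ ↦ hasGradientAt_exp_comp_sub_sub (hg (z - y)) (W y))
  rw [norm_smul, norm_of_nonneg (exp_pos _).le]
  exact mul_le_mul (exp_comp_sub_sub_le hg hK hz y (W y)) (hK _) (norm_nonneg _) (by positivity)

theorem hasGradientAt_log_integral_exp_comp_sub_sub [SecondCountableTopology E] [NeZero μ]
    (hg : ∀ z, HasGradientAt g (g' z) z) (hK : ∀ z, ‖g' z‖ ≤ K)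
    (hW : Integrable (fun y ↦ exp (K * ‖y‖ - W y)) μ) (x : E) :
    HasGradientAt (fun x ↦ log (∫ y, exp (g (x - y) - W y) ∂μ))
      ((∫ y, exp (g (x - y) - W y) ∂μ)⁻¹ • ∫ y, exp (g (x - y) - W y) • g' (x - y) ∂μ) x :=
  hasGradientAt_comp_of_hasDerivAt
    (hasDerivAt_log (integral_exp_pos (integrable_exp_comp_sub_sub hg hK hW x)).ne')
    (hasGradientAt_integral_exp_comp_sub_sub hg hK hW x)

end GibbsIntegral

section Gaussian

variable {V : Type*} [NormedAddCommGroup V] [InnerProductSpace ℝ V] [FiniteDimensional ℝ V]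
  [MeasurableSpace V] [BorelSpace V] {b : ℝ}

theorem integrable_exp_neg_mul_sq_norm_s3 (hb : 0 < b) :
    Integrable (fun y : V ↦ exp (-b * ‖y‖ ^ 2)) := by
  apply Integrable.of_integral_ne_zero
  rw [GaussianFourier.integral_rexp_neg_mul_sq_norm hb]
  positivity

theorem integrable_exp_mul_norm_sub_mul_sq_norm (hb : 0 < b) (c : ℝ) :
    Integrable (fun y : V ↦ exp (c * ‖y‖ - b * ‖y‖ ^ 2)) := by
  refine ((integrable_exp_neg_mul_sq_norm_s3 (half_pos hb)).const_mul (exp (c ^ 2 / (2 * b)))).mono'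
    (by fun_prop) (.of_forall fun y ↦ ?_)
  have young : c * ‖y‖ ≤ c ^ 2 / (2 * b) + b / 2 * ‖y‖ ^ 2 := by
    have square : c ^ 2 / (2 * b) + b / 2 * ‖y‖ ^ 2 - c * ‖y‖ = (c - b * ‖y‖) ^ 2 / (2 * b) := by
      field_simp
      ring
    have : 0 ≤ (c - b * ‖y‖) ^ 2 / (2 * b) := by positivity
    linarith
  rw [norm_of_nonneg (exp_pos _).le, ← exp_add]
  gcongr
  linarith

end Gaussian

section LocalEntropy

variable {n : ℕ} {β t : ℝ} {f : EuclideanSpace ℝ (Fin n) → ℝ}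

theorem integral_heatKernel_mul_exp_eq_mul_Z2 (x : EuclideanSpace ℝ (Fin n)) :
    ∫ y, heatKernel (β⁻¹ * t) (x - y) * exp (-β * f y) =
      (2 * π * (β⁻¹ * t)) ^ (-(n : ℝ) / 2) * Z2 β t f x := by
  rw [Z2, ← integral_const_mul, ← integral_sub_left_eq_self _ volume x]
  congr with y
  rw [heatKernel, sub_sub_cancel, mul_assoc, ← exp_add]
  congr 2
  simp only [div_eq_mul_inv, mul_inv, inv_inv]
  ring

theorem localEntropy_eq_log_Z2_add (hβ : 0 < β) (ht : 0 < t) {x : EuclideanSpace ℝ (Fin n)}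
    (hZ : Z2 β t f x ≠ 0) :
    localEntropy β f x t =
      -β⁻¹ * (log (Z2 β t f x) + log ((2 * π * (β⁻¹ * t)) ^ (-(n : ℝ) / 2))) := by
  rw [localEntropy, integral_heatKernel_mul_exp_eq_mul_Z2, log_mul (by positivity) hZ, add_comm]

theorem neg_inv_smul_inv_Z2_smul_integral (hβ : β ≠ 0) (x : EuclideanSpace ℝ (Fin n)) :
    -β⁻¹ • (Z2 β t f x)⁻¹ •
        ∫ y, exp (-β * f (x - y) - β / (2 * t) * ‖y‖ ^ 2) • -β • gradient f (x - y) =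
      ∫ y, rho2 β t f x y • gradient f (x - y) := by
  rw [← integral_smul, ← integral_smul]
  congr with y : 1
  simp only [rho2, smul_smul]
  congr 1
  field_simp

end LocalEntropy

theorem stmt_3_general {n : ℕ} {β t : ℝ} (hβ : 0 < β) (ht : 0 < t)
    {f : EuclideanSpace ℝ (Fin n) → ℝ} (hf : Differentiable ℝ f)
    (hfg : ∃ M, ∀ x, ‖gradient f x‖ ≤ M) (x : EuclideanSpace ℝ (Fin n)) :
    HasGradientAt (fun x' ↦ localEntropy β f x' t)
      (∫ y, rho2 β t f x y • gradient f (x - y)) x := by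
  obtain ⟨M, hM⟩ := hfg
  have hg (z) : HasGradientAt (fun z ↦ -β * f z) (-β • gradient f z) z :=
    hasGradientAt_comp_of_hasDerivAt (hasDerivAt_const_mul (-β)) (hf z).hasGradientAt
  have hK (z) : ‖-β • gradient f z‖ ≤ ‖-β‖ * M := by
    rw [norm_smul]
    gcongr
    exact hM z
  have hW := integrable_exp_mul_norm_sub_mul_sq_norm (V := EuclideanSpace ℝ (Fin n))
    (show 0 < β / (2 * t) by positivity) (‖-β‖ * M)
  have Z2_ne_zero (z) : Z2 β t f z ≠ 0 :=
    (integral_exp_pos (integrable_exp_comp_sub_sub hg hK hW z)).ne'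
  have hlog : HasGradientAt (fun z ↦ log (Z2 β t f z)) _ x :=
    hasGradientAt_log_integral_exp_comp_sub_sub hg hK hW x
  rw [funext fun z ↦ localEntropy_eq_log_Z2_add hβ ht (Z2_ne_zero z),
    ← neg_inv_smul_inv_Z2_smul_integral hβ.ne' x]
  exact hasGradientAt_comp_of_hasDerivAt
    (φ := fun r ↦ -β⁻¹ * (r + log ((2 * π * (β⁻¹ * t)) ^ (-(n : ℝ) / 2))))
    (by simpa using ((hasDerivAt_id (log (Z2 β t f x))).add_const _).const_mul (-β⁻¹)) hlog

/-- The spatial gradient of the local entropy is the average of `∇f(x-y)` against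
the Gibbs density `ρ₂(y; x)`. -/
theorem stmt_3 (n : ℕ) (hn : 1 ≤ n) (β t : ℝ) (hβ : 0 < β) (ht : 0 < t)
    (f : EuclideanSpace ℝ (Fin n) → ℝ) (hf : ContDiff ℝ 1 f)
    (hfb : ∃ M, ∀ x, |f x| ≤ M) (hfg : ∃ M, ∀ x, ‖gradient f x‖ ≤ M) :
    ∀ x, gradient (fun x' => localEntropy β f x' t) x
      = ∫ y, rho2 β t f x y • gradient f (x - y) := fun x ↦
  (stmt_3_general hβ ht (hf.differentiable one_ne_zero) hfg x).gradient
end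

section
/- Let n ≥ 1, β > 0, T > 0, and let u : ℝⁿ × [0,T] → ℝ be a smooth solution of the viscous Hamilton–Jacobi equation ∂u/∂t = −(1/2)‖∇u‖² + (β⁻¹/2)Δu, such that ∇u and all spatial derivatives of u up to fourth order are bounded on ℝⁿ × [0,T]. Suppose C_Lap > 0 satisfies Δu(x,0) ≤ C_Lap for all x ∈ ℝⁿ. Then Δu(x,t) ≤ 1/(C_Lap⁻¹ + t/n) for all x ∈ ℝⁿ and all t ∈ [0,T]. -/
open Real

/-!
Summing the equation differentiated twice in each direction (Bochner's formula) shows that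
`v = Δu` satisfies `∂ₜv = νΔv - ∇u · ∇v - |∇²u|²`, with `ν = β⁻¹ / 2`, and `|∇²u|² ≥ v² / n` by
Cauchy–Schwarz. The function `φ(t) = 1 / (C⁻¹ + t / n)`, constant in space, solves `φ' = -φ² / n`,
so wherever `v > φ` the difference `v - φ` satisfies a linear drift-diffusion inequality, and the
maximum principle gives `v ≤ φ`. As the strip is unbounded, a small multiple of `e^{Kt}(1 + ‖x‖²)`
is first subtracted: the maximum is then attained, and for `K` large compared with the drift the
subtracted term is a strict supersolution.
-/

open Set Filter Topology
open scoped InnerProductSpace Gradient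

/-- The derivative of `f` within `S` in the direction `w`. It is read off from `fderivWithin`, so
that at a boundary point of `S` it is linear in `w`, whether or not `w` points into `S`. -/
noncomputable def dirDerivWithin {F V : Type*} [NormedAddCommGroup F] [NormedSpace ℝ F]
    [NormedAddCommGroup V] [NormedSpace ℝ V] (S : Set F) (w : F) (f : F → V) (p : F) : V :=
  fderivWithin ℝ f S p w

/-- The second-order operator `∑ᵢ ∂²/∂eᵢ²` within `S`: the Laplacian when the `eᵢ` are an
orthonormal basis of the whole space, and the spatial Laplacian on space-time when they are of the
form `(bᵢ, 0)` for an orthonormal basis `bᵢ` of space. -/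
noncomputable def dirLaplacianWithin {F V ι : Type*} [NormedAddCommGroup F] [NormedSpace ℝ F]
    [NormedAddCommGroup V] [NormedSpace ℝ V] [Fintype ι] (S : Set F) (e : ι → F) (f : F → V)
    (p : F) : V :=
  ∑ i, dirDerivWithin S (e i) (dirDerivWithin S (e i) f) p

local notation "D[" S ";" w "]" => dirDerivWithin S w
local notation "Δ[" S ";" e "]" => dirLaplacianWithin S e

section DirectionalDerivatives

variable {F V ι : Type*} [NormedAddCommGroup F] [NormedSpace ℝ F]
  [NormedAddCommGroup V] [NormedSpace ℝ V] [Fintype ι] {S : Set F} {p : F}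

lemma dirDerivWithin_of_hasFDerivAt {f : F → V} {f' : F →L[ℝ] V} (hS : UniqueDiffWithinAt ℝ S p)
    (hf : HasFDerivAt f f' p) (w : F) : D[S; w] f p = f' w := by
  rw [dirDerivWithin, hf.hasFDerivWithinAt.fderivWithin hS]

lemma dirDerivWithin_congr {f g : F → V} (hfg : EqOn f g S) (hp : p ∈ S) (w : F) :
    D[S; w] f p = D[S; w] g p := by
  simp only [dirDerivWithin, fderivWithin_congr hfg (hfg hp)]

lemma contDiffOn_dirDerivWithin {m k : WithTop ℕ∞} {f : F → V} (hf : ContDiffOn ℝ k f S)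
    (hS : UniqueDiffOn ℝ S) (hmk : m + 1 ≤ k) (w : F) : ContDiffOn ℝ m (D[S; w] f) S :=
  (hf.fderivWithin hS hmk).clm_apply contDiffOn_const

lemma contDiffOn_dirLaplacianWithin {m k : WithTop ℕ∞} {f : F → V} (hf : ContDiffOn ℝ k f S)
    (hS : UniqueDiffOn ℝ S) (hmk : m + 1 + 1 ≤ k) (e : ι → F) : ContDiffOn ℝ m (Δ[S; e] f) S :=
  ContDiffOn.sum fun i _ =>
    contDiffOn_dirDerivWithin (contDiffOn_dirDerivWithin hf hS hmk (e i)) hS le_rfl (e i)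

lemma dirDerivWithin_sub {f g : F → V} (hS : UniqueDiffWithinAt ℝ S p)
    (hf : DifferentiableWithinAt ℝ f S p) (hg : DifferentiableWithinAt ℝ g S p) (w : F) :
    D[S; w] (fun q => f q - g q) p = D[S; w] f p - D[S; w] g p := by
  simp only [dirDerivWithin, fderivWithin_fun_sub hS hf hg, sub_apply]

lemma dirDerivWithin_const_smul {f : F → V} (hS : UniqueDiffWithinAt ℝ S p)
    (hf : DifferentiableWithinAt ℝ f S p) (c : ℝ) (w : F) :
    D[S; w] (fun q => c • f q) p = c • D[S; w] f p := by
  simp only [dirDerivWithin, fderivWithin_fun_const_smul hS hf, smul_apply]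

lemma dirDerivWithin_sum {f : ι → F → V} (hS : UniqueDiffWithinAt ℝ S p)
    (hf : ∀ j, DifferentiableWithinAt ℝ (f j) S p) (w : F) :
    D[S; w] (fun q => ∑ j, f j q) p = ∑ j, D[S; w] (f j) p := by
  simp only [dirDerivWithin, fderivWithin_fun_sum hS fun j _ => hf j, sum_apply]

lemma dirDerivWithin_mul {f g : F → ℝ} (hS : UniqueDiffWithinAt ℝ S p)
    (hf : DifferentiableWithinAt ℝ f S p) (hg : DifferentiableWithinAt ℝ g S p) (w : F) :
    D[S; w] (fun q => f q * g q) p = f p * D[S; w] g p + g p * D[S; w] f p := by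
  simp only [dirDerivWithin, fderivWithin_fun_mul hS hf hg, add_apply,
    smul_apply, smul_eq_mul]

lemma dirDerivWithin_sq {f : F → ℝ} (hS : UniqueDiffWithinAt ℝ S p)
    (hf : DifferentiableWithinAt ℝ f S p) (w : F) :
    D[S; w] (fun q => f q ^ 2) p = (2 : ℝ) • (f p * D[S; w] f p) := by
  simp only [sq]
  rw [dirDerivWithin_mul hS hf hf, smul_eq_mul, two_mul]

lemma dirDerivWithin_sum_smul (c : ι → ℝ) (e : ι → F) (f : F → V) :
    D[S; ∑ j, c j • e j] f p = ∑ j, c j • D[S; e j] f p := by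
  simp only [dirDerivWithin, map_sum, map_smul]

lemma dirDerivWithin_dirDerivWithin {f : F → V} (hS : UniqueDiffOn ℝ S)
    (hf : ContDiffOn ℝ 2 f S) (hp : p ∈ S) (w w' : F) :
    D[S; w] (D[S; w'] f) p = fderivWithin ℝ (fderivWithin ℝ f S) S p w w' := by
  have hd : DifferentiableWithinAt ℝ (fderivWithin ℝ f S) S p :=
    (hf.fderivWithin (m := 1) hS (by norm_num)).differentiableOn one_ne_zero p hp
  change fderivWithin ℝ (fun q => fderivWithin ℝ f S q w') S p w = _
  simp [fderivWithin_clm_apply (hS p hp) hd (differentiableWithinAt_const w')]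

lemma dirDerivWithin_comm {f : F → V} (hS : UniqueDiffOn ℝ S) (hSint : S ⊆ closure (interior S))
    (hf : ContDiffOn ℝ 2 f S) (hp : p ∈ S) (w w' : F) :
    D[S; w] (D[S; w'] f) p = D[S; w'] (D[S; w] f) p := by
  rw [dirDerivWithin_dirDerivWithin hS hf hp, dirDerivWithin_dirDerivWithin hS hf hp]
  exact (hf p hp).isSymmSndFDerivWithinAt (by simp) hS (hSint hp) hp w w'

lemma dirLaplacianWithin_congr {f g : F → V} (hfg : EqOn f g S) (hp : p ∈ S) (e : ι → F) :
    Δ[S; e] f p = Δ[S; e] g p :=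
  Finset.sum_congr rfl fun i _ =>
    dirDerivWithin_congr (fun _ hq => dirDerivWithin_congr hfg hq (e i)) hp (e i)

lemma dirLaplacianWithin_sub {f g : F → V} (hS : UniqueDiffOn ℝ S) (hf : ContDiffOn ℝ 2 f S)
    (hg : ContDiffOn ℝ 2 g S) (hp : p ∈ S) (e : ι → F) :
    Δ[S; e] (fun q => f q - g q) p = Δ[S; e] f p - Δ[S; e] g p := by
  have differentiableOn_D {h : F → V} (hh : ContDiffOn ℝ 2 h S) (i : ι) :=
    (contDiffOn_dirDerivWithin (m := 1) hh hS (by norm_num) (e i)).differentiableOn one_ne_zero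
  simp only [dirLaplacianWithin, ← Finset.sum_sub_distrib]
  refine Finset.sum_congr rfl fun i _ => ?_
  rw [dirDerivWithin_congr (fun q hq => dirDerivWithin_sub (hS q hq)
      (hf.differentiableOn two_ne_zero q hq) (hg.differentiableOn two_ne_zero q hq) (e i)) hp,
    dirDerivWithin_sub (hS p hp) (differentiableOn_D hf i p hp) (differentiableOn_D hg i p hp)]

lemma dirLaplacianWithin_const_smul {f : F → V} (hS : UniqueDiffOn ℝ S)
    (hf : ContDiffOn ℝ 2 f S) (hp : p ∈ S) (c : ℝ) (e : ι → F) :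
    Δ[S; e] (fun q => c • f q) p = c • Δ[S; e] f p := by
  simp only [dirLaplacianWithin, Finset.smul_sum]
  refine Finset.sum_congr rfl fun i _ => ?_
  rw [dirDerivWithin_congr (fun q hq => dirDerivWithin_const_smul (hS q hq)
      (hf.differentiableOn two_ne_zero q hq) c (e i)) hp,
    dirDerivWithin_const_smul (hS p hp) ((contDiffOn_dirDerivWithin (m := 1) hf hS
      (by norm_num) (e i)).differentiableOn one_ne_zero p hp)]

lemma dirLaplacianWithin_sum {κ : Type*} [Fintype κ] {f : κ → F → V} (hS : UniqueDiffOn ℝ S)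
    (hf : ∀ j, ContDiffOn ℝ 2 (f j) S) (hp : p ∈ S) (e : ι → F) :
    Δ[S; e] (fun q => ∑ j, f j q) p = ∑ j, Δ[S; e] (f j) p := by
  simp only [dirLaplacianWithin]
  rw [Finset.sum_comm]
  refine Finset.sum_congr rfl fun i _ => ?_
  rw [dirDerivWithin_congr (fun q hq => dirDerivWithin_sum (hS q hq)
      (fun j => (hf j).differentiableOn two_ne_zero q hq) (e i)) hp,
    dirDerivWithin_sum (hS p hp) fun j => (contDiffOn_dirDerivWithin (m := 1) (hf j) hS
      (by norm_num) (e i)).differentiableOn one_ne_zero p hp]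

lemma dirLaplacianWithin_sq {f : F → ℝ} (hS : UniqueDiffOn ℝ S) (hf : ContDiffOn ℝ 2 f S)
    (hp : p ∈ S) (e : ι → F) :
    Δ[S; e] (fun q => f q ^ 2) p = 2 * (∑ i, D[S; e i] f p ^ 2 + f p * Δ[S; e] f p) := by
  have hdf : DifferentiableOn ℝ f S := hf.differentiableOn two_ne_zero
  simp only [dirLaplacianWithin, Finset.mul_sum, ← Finset.sum_add_distrib]
  refine Finset.sum_congr rfl fun i _ => ?_
  have hD : DifferentiableWithinAt ℝ (D[S; e i] f) S p :=
    (contDiffOn_dirDerivWithin (m := 1) hf hS (by norm_num) (e i)).differentiableOn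
      one_ne_zero p hp
  rw [dirDerivWithin_congr (fun q hq => dirDerivWithin_sq (hS q hq) (hdf q hq) (e i)) hp,
    dirDerivWithin_const_smul (hS p hp) ((hdf p hp).fun_mul hD),
    dirDerivWithin_mul (hS p hp) (hdf p hp) hD, smul_eq_mul]
  ring

lemma dirLaplacianWithin_dirDerivWithin_comm {f : F → V} (hS : UniqueDiffOn ℝ S)
    (hSint : S ⊆ closure (interior S)) (hf : ContDiffOn ℝ 3 f S) (hp : p ∈ S) (e : ι → F)
    (w : F) : Δ[S; e] (D[S; w] f) p = D[S; w] (Δ[S; e] f) p := by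
  have hD (i : ι) : ContDiffOn ℝ 2 (D[S; e i] f) S :=
    contDiffOn_dirDerivWithin hf hS (by norm_num) (e i)
  have hDD (i : ι) : DifferentiableWithinAt ℝ (D[S; e i] (D[S; e i] f)) S p :=
    (contDiffOn_dirDerivWithin (m := 1) (hD i) hS (by norm_num) (e i)).differentiableOn
      one_ne_zero p hp
  unfold dirLaplacianWithin
  rw [dirDerivWithin_sum (hS p hp) hDD]
  refine Finset.sum_congr rfl fun i _ => ?_
  rw [dirDerivWithin_congr (fun q hq => dirDerivWithin_comm hS hSint
      (hf.of_le (by norm_num)) hq (e i) w) hp,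
    dirDerivWithin_comm hS hSint (hD i) hp]

/-- Bochner's formula `Δ|∇f|² = 2(|∇²f|² + ⟨∇f, ∇Δf⟩)`. -/
lemma dirLaplacianWithin_sum_sq_dirDerivWithin {f : F → ℝ} (hS : UniqueDiffOn ℝ S)
    (hSint : S ⊆ closure (interior S)) (hf : ContDiffOn ℝ 3 f S) (hp : p ∈ S) (e : ι → F) :
    Δ[S; e] (fun q => ∑ j, D[S; e j] f q ^ 2) p =
      2 * (∑ j, ∑ i, D[S; e i] (D[S; e j] f) p ^ 2
        + D[S; ∑ j, D[S; e j] f p • e j] (Δ[S; e] f) p) := by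
  have hD (j : ι) : ContDiffOn ℝ 2 (D[S; e j] f) S :=
    contDiffOn_dirDerivWithin hf hS (by norm_num) (e j)
  rw [dirLaplacianWithin_sum hS (fun j => (hD j).pow 2) hp, dirDerivWithin_sum_smul,
    ← Finset.sum_add_distrib, Finset.mul_sum]
  refine Finset.sum_congr rfl fun j _ => ?_
  rw [dirLaplacianWithin_sq hS (hD j) hp,
    dirLaplacianWithin_dirDerivWithin_comm hS hSint hf hp, smul_eq_mul]

lemma sq_dirLaplacianWithin_le (e : ι → F) (f : F → ℝ) :
    Δ[S; e] f p ^ 2 ≤ Fintype.card ι * ∑ j, ∑ i, D[S; e i] (D[S; e j] f) p ^ 2 := by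
  calc Δ[S; e] f p ^ 2
      ≤ Fintype.card ι * ∑ j, D[S; e j] (D[S; e j] f) p ^ 2 := sq_sum_le_card_mul_sum_sq
    _ ≤ Fintype.card ι * ∑ j, ∑ i, D[S; e i] (D[S; e j] f) p ^ 2 := by
        gcongr with j
        exact Finset.single_le_sum (f := fun i => D[S; e i] (D[S; e j] f) p ^ 2)
          (fun i _ => sq_nonneg _) (Finset.mem_univ j)

lemma dirDerivWithin_dirLaplacianWithin_of_hamiltonJacobi {U : F → ℝ} {ν : ℝ} {τ : F} {e : ι → F}
    (hS : UniqueDiffOn ℝ S) (hSint : S ⊆ closure (interior S)) (hU : ContDiffOn ℝ 4 U S)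
    (hHJ : ∀ q ∈ S, D[S; τ] U q =
      ν * Δ[S; e] U q - 1 / 2 * ∑ j, D[S; e j] U q ^ 2) (hp : p ∈ S) :
    D[S; τ] (Δ[S; e] U) p = ν * Δ[S; e] (Δ[S; e] U) p
      - ∑ j, ∑ i, D[S; e i] (D[S; e j] U) p ^ 2
      - D[S; ∑ j, D[S; e j] U p • e j] (Δ[S; e] U) p := by
  have hD (j : ι) : ContDiffOn ℝ 2 (D[S; e j] U) S :=
    contDiffOn_dirDerivWithin hU hS (by norm_num) (e j)
  have hΔ : ContDiffOn ℝ 2 (Δ[S; e] U) S :=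
    contDiffOn_dirLaplacianWithin hU hS (by norm_num) e
  have hsq : ContDiffOn ℝ 2 (fun q => ∑ j, D[S; e j] U q ^ 2) S :=
    ContDiffOn.sum fun j _ => (hD j).pow 2
  have hU₃ : ContDiffOn ℝ 3 U S := hU.of_le (by norm_num)
  have hHJ' : EqOn (D[S; τ] U) (fun q =>
      ν • Δ[S; e] U q - (1 / 2 : ℝ) • ∑ j, D[S; e j] U q ^ 2) S := hHJ
  rw [← dirLaplacianWithin_dirDerivWithin_comm hS hSint hU₃ hp, dirLaplacianWithin_congr hHJ' hp,
    dirLaplacianWithin_sub hS (hΔ.const_smul ν) (hsq.const_smul _) hp,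
    dirLaplacianWithin_const_smul hS hΔ hp, dirLaplacianWithin_const_smul hS hsq hp,
    dirLaplacianWithin_sum_sq_dirDerivWithin hS hSint hU₃ hp, smul_eq_mul, smul_eq_mul]
  ring

end DirectionalDerivatives

section MaximumPoints

lemma nonpos_of_isLocalMax_of_hasDerivAt {h h' : ℝ → ℝ} {a b : ℝ} (hmax : IsLocalMax h a)
    (hh : ∀ᶠ s in 𝓝 a, HasDerivAt h (h' s) s) (hh' : HasDerivAt h' b a) : b ≤ 0 := by
  have hderiv : deriv h =ᶠ[𝓝 a] h' := hh.mono fun s hs => hs.deriv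
  by_contra! hb
  have hmin : IsLocalMin h a := isLocalMin_of_deriv_deriv_pos
    (by rwa [hderiv.deriv_eq, hh'.deriv]) hmax.deriv_eq_zero hh.self_of_nhds.continuousAt
  have hconst : h =ᶠ[𝓝 a] fun _ => h a := by
    filter_upwards [hmin, hmax] with s hmin hmax using le_antisymm hmax hmin
  have hzero : h' =ᶠ[𝓝 a] fun _ => 0 := by simpa using hderiv.symm.trans hconst.deriv
  exact hb.ne' (hh'.unique ((hasDerivAt_const a 0).congr_of_eventuallyEq hzero))

variable {F V ι : Type*} [NormedAddCommGroup F] [NormedSpace ℝ F]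
  [NormedAddCommGroup V] [NormedSpace ℝ V] [Fintype ι] {S : Set F} {p : F}

lemma dirDerivWithin_sub_nonpos_of_isMaxOn {f : F → ℝ} {q : F} (hmax : IsMaxOn f S p)
    (hS : Convex ℝ S) (hf : DifferentiableWithinAt ℝ f S p) (hp : p ∈ S) (hq : q ∈ S) :
    D[S; q - p] f p ≤ 0 :=
  hmax.localize.hasFDerivWithinAt_nonpos hf.hasFDerivWithinAt
    (sub_mem_posTangentConeAt_of_segment_subset (hS.segment_subset hp hq))

lemma hasDerivAt_comp_add_smul {f : F → V} {w : F} (hf : DifferentiableOn ℝ f S)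
    (hw : ∀ s : ℝ, p + s • w ∈ S) (s : ℝ) :
    HasDerivAt (fun s : ℝ => f (p + s • w)) (D[S; w] f (p + s • w)) s := by
  have hline : HasDerivAt (fun s : ℝ => p + s • w) w s := by
    simpa using ((hasDerivAt_id s).smul_const w).const_add p
  exact (hf _ (hw s)).hasFDerivWithinAt.comp_hasDerivAt s hline (.of_forall hw)

lemma dirDerivWithin_eq_zero_of_isMaxOn {f : F → ℝ} {w : F} (hmax : IsMaxOn f S p)
    (hf : DifferentiableOn ℝ f S) (hw : ∀ s : ℝ, p + s • w ∈ S) : D[S; w] f p = 0 := by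
  have hline : IsMaxOn (fun s : ℝ => f (p + s • w)) univ 0 := fun s _ => by
    simpa using hmax (hw s)
  simpa using (hline.isLocalMax univ_mem).hasDerivAt_eq_zero (hasDerivAt_comp_add_smul hf hw 0)

lemma dirLaplacianWithin_nonpos_of_isMaxOn {f : F → ℝ} {e : ι → F} (hmax : IsMaxOn f S p)
    (hS : UniqueDiffOn ℝ S) (hf : ContDiffOn ℝ 2 f S) (he : ∀ i, ∀ s : ℝ, p + s • e i ∈ S) :
    Δ[S; e] f p ≤ 0 := by
  refine Finset.sum_nonpos fun i _ => ?_
  have hD : DifferentiableOn ℝ (D[S; e i] f) S :=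
    (contDiffOn_dirDerivWithin (m := 1) hf hS (by norm_num) (e i)).differentiableOn one_ne_zero
  have hline : IsMaxOn (fun s : ℝ => f (p + s • e i)) univ 0 := fun s _ => by
    simpa using hmax (he i s)
  exact nonpos_of_isLocalMax_of_hasDerivAt (hline.isLocalMax univ_mem)
    (.of_forall (hasDerivAt_comp_add_smul (hf.differentiableOn two_ne_zero) (he i)))
    (by simpa using hasDerivAt_comp_add_smul hD (he i) 0)

end MaximumPoints

section Strip

variable {E ι : Type*} [NormedAddCommGroup E] [Fintype ι] {T : ℝ}

/-- The closed space-time strip `E × [0, T]`. -/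
abbrev strip (E : Type*) (T : ℝ) : Set (E × ℝ) := univ ×ˢ Icc 0 T

lemma strip_subset_closure_interior (hT : 0 < T) :
    strip E T ⊆ closure (interior (strip E T)) := by
  rw [interior_prod_eq, closure_prod_eq, interior_univ, closure_univ, interior_Icc,
    closure_Ioo hT.ne]

/-- The barrier `e^{Kt}(1 + ‖x‖²)`, which grows at spatial infinity and, for large `K`, is a strict
supersolution of drift-diffusion equations whose drift grows at most linearly. -/
noncomputable def quadraticBarrier (K : ℝ) (p : E × ℝ) : ℝ := exp (K * p.2) * (1 + ‖p.1‖ ^ 2)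

lemma quadraticBarrier_pos (K : ℝ) (p : E × ℝ) : 0 < quadraticBarrier K p := by
  unfold quadraticBarrier
  positivity

lemma one_add_sq_norm_le_quadraticBarrier {K : ℝ} {p : E × ℝ} (hKp : 0 ≤ K * p.2) :
    1 + ‖p.1‖ ^ 2 ≤ quadraticBarrier K p :=
  le_mul_of_one_le_left (by positivity) (one_le_exp hKp)

section NormedSpace

variable [NormedSpace ℝ E] {S : Set (E × ℝ)} {p : E × ℝ}

lemma uniqueDiffOn_strip (hT : 0 < T) : UniqueDiffOn ℝ (strip E T) :=
  uniqueDiffOn_univ.prod (uniqueDiffOn_Icc hT)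

lemma add_smul_mem_strip (hp : p ∈ strip E T) (w : E) (s : ℝ) :
    p + s • ((w, 0) : E × ℝ) ∈ strip E T := by
  simpa using hp

lemma dirDerivWithin_time_nonneg_of_isMaxOn {f : E × ℝ → ℝ}
    (hmax : IsMaxOn f (strip E T) p) (hf : DifferentiableWithinAt ℝ f (strip E T) p)
    (hp : p ∈ strip E T) (hp₀ : 0 < p.2) : 0 ≤ D[strip E T; (0, 1)] f p := by
  have hinitial : (p.1, (0 : ℝ)) ∈ strip E T := ⟨trivial, le_rfl, hp.2.1.trans hp.2.2⟩
  have hbackward : D[strip E T; (p.1, 0) - p] f p ≤ 0 :=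
    dirDerivWithin_sub_nonpos_of_isMaxOn hmax (convex_univ.prod (convex_Icc 0 T)) hf hp hinitial
  have hdir : (p.1, (0 : ℝ)) - p = -p.2 • ((0, 1) : E × ℝ) := by ext <;> simp
  rw [hdir, dirDerivWithin, map_smul, smul_eq_mul, neg_mul, neg_nonpos] at hbackward
  exact nonneg_of_mul_nonneg_right hbackward hp₀

lemma contDiff_slice {V : Type*} [NormedAddCommGroup V] [NormedSpace ℝ V] {k : WithTop ℕ∞}
    {f : E × ℝ → V} {t : ℝ} (hf : ContDiffOn ℝ k f (strip E T)) (ht : t ∈ Icc 0 T) :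
    ContDiff ℝ k fun y => f (y, t) :=
  contDiffOn_univ.1 <| hf.comp (contDiff_id.prodMk contDiff_const).contDiffOn
    fun _ _ => ⟨trivial, ht⟩

lemma hasFDerivAt_slice {V : Type*} [NormedAddCommGroup V] [NormedSpace ℝ V] {f : E × ℝ → V}
    {x : E} {t : ℝ} (hf : DifferentiableWithinAt ℝ f (strip E T) (x, t)) (ht : t ∈ Icc 0 T) :
    HasFDerivAt (fun y => f (y, t))
      ((fderivWithin ℝ f (strip E T) (x, t)).comp (.inl ℝ E ℝ)) x :=
  hf.hasFDerivWithinAt.comp_hasFDerivAt x (hasFDerivAt_prodMk_left x t)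
    (.of_forall fun y => (⟨trivial, ht⟩ : (y, t) ∈ strip E T))

lemma fderiv_slice_apply {V : Type*} [NormedAddCommGroup V] [NormedSpace ℝ V] {f : E × ℝ → V}
    {x : E} {t : ℝ} (hf : DifferentiableWithinAt ℝ f (strip E T) (x, t)) (ht : t ∈ Icc 0 T)
    (w : E) : fderiv ℝ (fun y => f (y, t)) x w = D[strip E T; (w, 0)] f (x, t) := by
  simp [(hasFDerivAt_slice hf ht).fderiv, dirDerivWithin]

lemma hasDerivWithinAt_time {V : Type*} [NormedAddCommGroup V] [NormedSpace ℝ V] {f : E × ℝ → V}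
    {x : E} {t : ℝ} (hf : DifferentiableWithinAt ℝ f (strip E T) (x, t)) :
    HasDerivWithinAt (fun s => f (x, s)) (D[strip E T; (0, 1)] f (x, t)) (Icc 0 T) t :=
  hf.hasFDerivWithinAt.comp_hasDerivWithinAt t
    ((hasDerivAt_const t x).prodMk (hasDerivAt_id t)).hasDerivWithinAt
    (fun _ hs => ⟨trivial, hs⟩)

lemma dirDerivWithin_comp_snd {φ : ℝ → ℝ} {φ' : ℝ} (hS : UniqueDiffWithinAt ℝ S p)
    (hφ : HasDerivAt φ φ' p.2) (w : E × ℝ) :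
    D[S; w] (fun q => φ q.2) p = w.2 * φ' := by
  have hφsnd : HasFDerivAt (fun q : E × ℝ => φ q.2) (φ' • ContinuousLinearMap.snd ℝ E ℝ) p :=
    hφ.comp_hasFDerivAt p hasFDerivAt_snd
  rw [dirDerivWithin_of_hasFDerivAt hS hφsnd]
  simp [mul_comm]

lemma dirLaplacianWithin_comp_snd {φ : ℝ → ℝ} (hS : UniqueDiffOn ℝ S)
    (hφ : ∀ q ∈ S, DifferentiableAt ℝ φ q.2) (hp : p ∈ S) (e : ι → E) :
    Δ[S; fun i => (e i, 0)] (fun q => φ q.2) p = 0 := by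
  refine Finset.sum_eq_zero fun i _ => ?_
  have hD : EqOn (D[S; (e i, 0)] fun q : E × ℝ => φ q.2) (fun _ => 0) S := fun q hq => by
    simp [dirDerivWithin_comp_snd (hS q hq) (hφ q hq).hasDerivAt]
  rw [dirDerivWithin_congr hD hp]
  simp [dirDerivWithin]

lemma hasFDerivAt_exp_time (K : ℝ) (p : E × ℝ) :
    HasFDerivAt (fun q : E × ℝ => exp (K * q.2))
      (exp (K * p.2) • K • ContinuousLinearMap.snd ℝ E ℝ) p :=
  (hasFDerivAt_snd.const_mul K).exp

end NormedSpace

section InnerProductSpace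

variable [InnerProductSpace ℝ E] {S : Set (E × ℝ)} {p : E × ℝ}

lemma contDiff_quadraticBarrier {k : WithTop ℕ∞} (K : ℝ) :
    ContDiff ℝ k (quadraticBarrier K : E × ℝ → ℝ) :=
  (contDiff_const.mul contDiff_snd).exp.mul (contDiff_const.add (contDiff_fst.norm_sq ℝ))

lemma dirDerivWithin_quadraticBarrier (hS : UniqueDiffWithinAt ℝ S p) (K : ℝ) (w : E × ℝ) :
    D[S; w] (quadraticBarrier K) p =
      K * w.2 * quadraticBarrier K p + 2 * (exp (K * p.2) * ⟪p.1, w.1⟫_ℝ) := by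
  have hbarrier : HasFDerivAt (quadraticBarrier K) _ p :=
    (hasFDerivAt_exp_time K p).mul ((hasFDerivAt_fst (𝕜 := ℝ)).norm_sq.const_add 1)
  rw [dirDerivWithin_of_hasFDerivAt hS hbarrier]
  simp [quadraticBarrier]
  ring

lemma dirLaplacianWithin_quadraticBarrier (hS : UniqueDiffOn ℝ S) (hp : p ∈ S) (K : ℝ)
    (e : ι → E) : Δ[S; fun i => (e i, 0)] (quadraticBarrier K) p =
      2 * exp (K * p.2) * ∑ i, ‖e i‖ ^ 2 := by
  rw [dirLaplacianWithin, Finset.mul_sum]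
  refine Finset.sum_congr rfl fun i _ => ?_
  have hfirst : EqOn (D[S; (e i, 0)] (quadraticBarrier K))
      (fun q => 2 * (exp (K * q.2) * ⟪q.1, e i⟫_ℝ)) S := fun q hq => by
    simp [dirDerivWithin_quadraticBarrier (hS q hq)]
  have hsecond : HasFDerivAt (fun q : E × ℝ => 2 * (exp (K * q.2) * ⟪q.1, e i⟫_ℝ)) _ p :=
    ((hasFDerivAt_exp_time K p).mul
      (hasFDerivAt_fst.inner ℝ (hasFDerivAt_const (e i) p))).const_mul 2
  rw [dirDerivWithin_congr hfirst hp, dirDerivWithin_of_hasFDerivAt (hS p hp) hsecond]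
  simp
  ring

lemma quadraticBarrier_strict_supersolution (hS : UniqueDiffOn ℝ S) (hp : p ∈ S) {ν M : ℝ}
    (hν : 0 ≤ ν) (e : ι → E) {a : E} (ha : ‖a‖ ≤ M * (1 + ‖p.1‖)) {K : ℝ}
    (hK : 3 * M + 2 * ν * ∑ i, ‖e i‖ ^ 2 < K) :
    ν * Δ[S; fun i => (e i, 0)] (quadraticBarrier K) p - D[S; (a, 0)] (quadraticBarrier K) p
      < D[S; (0, 1)] (quadraticBarrier K) p := by
  have hM : 0 ≤ M := nonneg_of_mul_nonneg_left ((norm_nonneg a).trans ha) (by positivity)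
  have hdrift : -(2 * ⟪p.1, a⟫_ℝ) ≤ 3 * M * (1 + ‖p.1‖ ^ 2) := by
    have hinner : -⟪p.1, a⟫_ℝ ≤ ‖p.1‖ * (M * (1 + ‖p.1‖)) :=
      (neg_le_abs _).trans ((abs_real_inner_le_norm _ _).trans (by gcongr))
    nlinarith [mul_nonneg hM (sq_nonneg (‖p.1‖ - 1))]
  have hdiffusion : 2 * ν * ∑ i, ‖e i‖ ^ 2 ≤ (2 * ν * ∑ i, ‖e i‖ ^ 2) * (1 + ‖p.1‖ ^ 2) :=
    le_mul_of_one_le_right (by positivity) (by simp)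
  have hgrowth : (3 * M + 2 * ν * ∑ i, ‖e i‖ ^ 2) * (1 + ‖p.1‖ ^ 2) < K * (1 + ‖p.1‖ ^ 2) := by
    gcongr
  rw [dirLaplacianWithin_quadraticBarrier hS hp, dirDerivWithin_quadraticBarrier (hS p hp),
    dirDerivWithin_quadraticBarrier (hS p hp)]
  have := mul_lt_mul_of_pos_left (by linarith :
    2 * ν * ∑ i, ‖e i‖ ^ 2 - 2 * ⟪p.1, a⟫_ℝ < K * (1 + ‖p.1‖ ^ 2)) (exp_pos (K * p.2))
  simp only [quadraticBarrier, mul_zero, zero_mul, inner_zero_right]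
  linarith

lemma exists_isMaxOn_sub_quadraticBarrier [FiniteDimensional ℝ E] {f : E × ℝ → ℝ} {B K ε : ℝ}
    (hT : 0 ≤ T) (hf : ContinuousOn f (strip E T)) (hB : ∀ p ∈ strip E T, f p ≤ B) (hK : 0 ≤ K)
    (hε : 0 < ε) :
    ∃ p ∈ strip E T, IsMaxOn (fun q => f q - ε • quadraticBarrier K q) (strip E T) p := by
  set z : E × ℝ → ℝ := fun q => f q - ε • quadraticBarrier K q
  have hz : ContinuousOn z (strip E T) :=
    hf.sub ((contDiff_quadraticBarrier (k := 0) K).continuous.const_smul ε).continuousOn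
  refine hz.exists_isMaxOn' (isClosed_univ.prod isClosed_Icc)
    (x₀ := (0, 0)) ⟨trivial, le_rfl, hT⟩ ?_
  have hfar : ∀ᶠ p : E × ℝ in cocompact (E × ℝ), T + (B - z (0, 0)) / ε ≤ ‖p‖ :=
    tendsto_norm_cocompact_atTop.eventually_ge_atTop _
  filter_upwards [hfar.filter_mono inf_le_left, mem_inf_of_right (mem_principal_self _)]
    with p hfar hp
  have hnorm : ‖p‖ ≤ ‖p.1‖ + T := by
    rw [Prod.norm_def, Real.norm_of_nonneg hp.2.1]
    exact max_le (by linarith) (by linarith [hp.2.2, norm_nonneg p.1])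
  have hbarrier : (B - z (0, 0)) / ε ≤ quadraticBarrier K p := by
    nlinarith [one_add_sq_norm_le_quadraticBarrier (mul_nonneg hK hp.2.1), sq_nonneg (‖p.1‖ - 1)]
  rw [div_le_iff₀' hε] at hbarrier
  simp only [z, smul_eq_mul] at hbarrier ⊢
  linarith [hB p hp]

lemma parabolic_le_of_isMaxOn_sub {f g : E × ℝ → ℝ} {a : E} {ν : ℝ} {e : ι → E}
    (hT : 0 < T) (hf : ContDiffOn ℝ 2 f (strip E T)) (hg : ContDiffOn ℝ 2 g (strip E T))
    (hmax : IsMaxOn (fun q => f q - g q) (strip E T) p) (hp : p ∈ strip E T) (hp₀ : 0 < p.2)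
    (hν : 0 ≤ ν) :
    D[strip E T; (0, 1)] g p - (ν * Δ[strip E T; fun i => (e i, 0)] g p - D[strip E T; (a, 0)] g p)
      ≤ D[strip E T; (0, 1)] f p
        - (ν * Δ[strip E T; fun i => (e i, 0)] f p - D[strip E T; (a, 0)] f p) := by
  have hS : UniqueDiffOn ℝ (strip E T) := uniqueDiffOn_strip hT
  have hfg : ContDiffOn ℝ 2 (fun q => f q - g q) (strip E T) := hf.sub hg
  have hD (w : E × ℝ) : D[strip E T; w] (fun q => f q - g q) p =
      D[strip E T; w] f p - D[strip E T; w] g p :=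
    dirDerivWithin_sub (hS p hp) (hf.differentiableOn two_ne_zero p hp)
      (hg.differentiableOn two_ne_zero p hp) w
  have htime : 0 ≤ D[strip E T; (0, 1)] f p - D[strip E T; (0, 1)] g p := by
    rw [← hD]
    exact dirDerivWithin_time_nonneg_of_isMaxOn hmax (hfg.differentiableOn two_ne_zero p hp) hp hp₀
  have hspace : D[strip E T; (a, 0)] f p - D[strip E T; (a, 0)] g p = 0 := by
    rw [← hD]
    exact dirDerivWithin_eq_zero_of_isMaxOn hmax (hfg.differentiableOn two_ne_zero)
      (add_smul_mem_strip hp a)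
  have hlaplacian : Δ[strip E T; fun i => (e i, 0)] f p
      - Δ[strip E T; fun i => (e i, 0)] g p ≤ 0 := by
    rw [← dirLaplacianWithin_sub hS hf hg hp]
    exact dirLaplacianWithin_nonpos_of_isMaxOn hmax hS hfg fun i => add_smul_mem_strip hp (e i)
  linarith [mul_nonpos_of_nonneg_of_nonpos hν hlaplacian]

lemma nonpos_of_parabolic_subsolution [FiniteDimensional ℝ E] {f : E × ℝ → ℝ} {a : E × ℝ → E}
    {ν M B : ℝ} {e : ι → E} (hT : 0 < T) (hf : ContDiffOn ℝ 2 f (strip E T)) (hν : 0 ≤ ν)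
    (ha : ∀ p ∈ strip E T, ‖a p‖ ≤ M * (1 + ‖p.1‖)) (hB : ∀ p ∈ strip E T, f p ≤ B)
    (hsub : ∀ p ∈ strip E T, 0 < f p → D[strip E T; (0, 1)] f p ≤
      ν * Δ[strip E T; fun i => (e i, 0)] f p - D[strip E T; (a p, 0)] f p)
    (hinit : ∀ x, f (x, 0) ≤ 0) {q : E × ℝ} (hq : q ∈ strip E T) : f q ≤ 0 := by
  have hS : UniqueDiffOn ℝ (strip E T) := uniqueDiffOn_strip hT
  have hM : 0 ≤ M := by simpa using (norm_nonneg _).trans (ha (0, 0) ⟨trivial, le_rfl, hT.le⟩)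
  set K : ℝ := 3 * M + 2 * ν * ∑ i, ‖e i‖ ^ 2 + 1
  have hb : ContDiffOn ℝ 2 (quadraticBarrier K) (strip E T) :=
    (contDiff_quadraticBarrier K).contDiffOn
  by_contra! hfq
  obtain ⟨ε, hε, hεq⟩ : ∃ ε : ℝ, 0 < ε ∧ quadraticBarrier K q * ε < f q :=
    exists_pos_mul_lt hfq _
  obtain ⟨p, hp, hmax⟩ :=
    exists_isMaxOn_sub_quadraticBarrier hT.le hf.continuousOn hB (by positivity : 0 ≤ K) hε
  have hfp : 0 < f p := by
    have hle : f q - ε * quadraticBarrier K q ≤ f p - ε * quadraticBarrier K p := hmax hq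
    linarith [mul_pos hε (quadraticBarrier_pos K p)]
  have hp₀ : 0 < p.2 := hp.2.1.lt_of_ne fun h => hfp.not_ge (by simpa [h] using hinit p.1)
  have hcompare := parabolic_le_of_isMaxOn_sub (a := a p) (e := e) hT hf (hb.const_smul ε) hmax
    hp hp₀ hν
  simp only [dirDerivWithin_const_smul (hS p hp) (hb.differentiableOn two_ne_zero p hp),
    dirLaplacianWithin_const_smul hS hb hp] at hcompare
  simp only [smul_eq_mul] at hcompare
  have hstrict := mul_lt_mul_of_pos_left
    (quadraticBarrier_strict_supersolution (K := K) hS hp hν e (ha p hp) (lt_add_one _)) hε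
  linarith [hsub p hp hfp]

lemma hasDerivAt_one_div_const_add_div {c N t : ℝ} (h : c + t / N ≠ 0) :
    HasDerivAt (fun s => 1 / (c + s / N)) (-((1 / (c + t / N)) ^ 2 / N)) t := by
  simp only [one_div]
  exact (((hasDerivAt_id' t).div_const N).const_add c).fun_inv h |>.congr_deriv (by
    generalize c + t / N = d
    ring)

lemma le_one_div_of_riccati_subsolution [FiniteDimensional ℝ E] {v : E × ℝ → ℝ} {a : E × ℝ → E}
    {ν M B C N : ℝ} {e : ι → E} (hT : 0 < T) (hv : ContDiffOn ℝ 2 v (strip E T)) (hν : 0 ≤ ν)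
    (ha : ∀ p ∈ strip E T, ‖a p‖ ≤ M * (1 + ‖p.1‖)) (hB : ∀ p ∈ strip E T, v p ≤ B)
    (hN : 0 ≤ N) (hC : 0 < C)
    (hsub : ∀ p ∈ strip E T, D[strip E T; (0, 1)] v p ≤
      ν * Δ[strip E T; fun i => (e i, 0)] v p - v p ^ 2 / N - D[strip E T; (a p, 0)] v p)
    (hinit : ∀ x, v (x, 0) ≤ C) {q : E × ℝ} (hq : q ∈ strip E T) :
    v q ≤ 1 / (C⁻¹ + q.2 / N) := by
  set φ : ℝ → ℝ := fun t => 1 / (C⁻¹ + t / N)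
  have hS : UniqueDiffOn ℝ (strip E T) := uniqueDiffOn_strip hT
  have hden {p : E × ℝ} (hp : p ∈ strip E T) : 0 < C⁻¹ + p.2 / N :=
    add_pos_of_pos_of_nonneg (inv_pos.2 hC) (div_nonneg hp.2.1 hN)
  have hφpos {p : E × ℝ} (hp : p ∈ strip E T) : 0 < φ p.2 := one_div_pos.2 (hden hp)
  have hφ' {p : E × ℝ} (hp : p ∈ strip E T) : HasDerivAt φ (-(φ p.2 ^ 2 / N)) p.2 :=
    hasDerivAt_one_div_const_add_div (hden hp).ne'
  have hφ : ContDiffOn ℝ 2 (fun p : E × ℝ => φ p.2) (strip E T) :=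
    contDiffOn_const.div (by fun_prop) fun p hp => (hden hp).ne'
  suffices v q - φ q.2 ≤ 0 by linarith
  refine nonpos_of_parabolic_subsolution (f := fun p => v p - φ p.2) (a := a) (e := e) (B := B)
    hT (hv.sub hφ) hν ha (fun p hp => by linarith [hB p hp, hφpos hp]) (fun p hp hpos => ?_)
    (fun x => by simpa [φ] using hinit x) hq
  have hsq : φ p.2 ^ 2 / N ≤ v p ^ 2 / N := by
    have := (hφpos hp).le
    gcongr
    linarith
  have hD (w : E × ℝ) : D[strip E T; w] (fun p => v p - φ p.2) p =
      D[strip E T; w] v p - w.2 * -(φ p.2 ^ 2 / N) := by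
    rw [dirDerivWithin_sub (hS p hp) (hv.differentiableOn two_ne_zero p hp)
      (hφ.differentiableOn two_ne_zero p hp), dirDerivWithin_comp_snd (hS p hp) (hφ' hp)]
  rw [hD, hD, dirLaplacianWithin_sub hS hv hφ hp,
    dirLaplacianWithin_comp_snd hS (fun _ hp => (hφ' hp).differentiableAt) hp]
  linarith [hsub p hp]

theorem dirLaplacianWithin_le_of_hamiltonJacobi [FiniteDimensional ℝ E] [Nonempty ι]
    {U : E × ℝ → ℝ} {ν M B C : ℝ} {e : ι → E} (hT : 0 < T) (hν : 0 ≤ ν) (hC : 0 < C)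
    (hU : ContDiffOn ℝ 4 U (strip E T))
    (hgrad : ∀ p ∈ strip E T, ‖∑ j, D[strip E T; (e j, 0)] U p • e j‖ ≤ M * (1 + ‖p.1‖))
    (hB : ∀ p ∈ strip E T, Δ[strip E T; fun i => (e i, 0)] U p ≤ B)
    (hHJ : ∀ p ∈ strip E T, D[strip E T; (0, 1)] U p =
      ν * Δ[strip E T; fun i => (e i, 0)] U p - 1 / 2 * ∑ j, D[strip E T; (e j, 0)] U p ^ 2)
    (hinit : ∀ x, Δ[strip E T; fun i => (e i, 0)] U (x, 0) ≤ C) {p : E × ℝ}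
    (hp : p ∈ strip E T) :
    Δ[strip E T; fun i => (e i, 0)] U p ≤ 1 / (C⁻¹ + p.2 / Fintype.card ι) := by
  have hS : UniqueDiffOn ℝ (strip E T) := uniqueDiffOn_strip hT
  refine le_one_div_of_riccati_subsolution (e := e) hT
    (contDiffOn_dirLaplacianWithin hU hS (by norm_num) _) hν hgrad hB (Nat.cast_nonneg _) hC
    (fun p hp => ?_) hinit hp
  have hcs := sq_dirLaplacianWithin_le (S := strip E T) (p := p) (fun i => (e i, (0 : ℝ))) U
  have hdrift : ∑ j, D[strip E T; (e j, 0)] U p • ((e j, 0) : E × ℝ) =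
      (∑ j, D[strip E T; (e j, 0)] U p • e j, 0) := by
    ext <;> simp [Prod.fst_sum, Prod.snd_sum]
  rw [dirDerivWithin_dirLaplacianWithin_of_hamiltonJacobi hS (strip_subset_closure_interior hT)
    hU hHJ hp, hdrift]
  rw [← div_le_iff₀' (by positivity)] at hcs
  linarith

lemma gradient_slice_eq_sum [CompleteSpace E] (e : OrthonormalBasis ι ℝ E) {f : E × ℝ → ℝ} {x : E}
    {t : ℝ} (hf : DifferentiableWithinAt ℝ f (strip E T) (x, t)) (ht : t ∈ Icc 0 T) :
    ∇ (fun y => f (y, t)) x = ∑ j, D[strip E T; (e j, 0)] f (x, t) • e j := by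
  rw [← e.sum_repr' (∇ (fun y => f (y, t)) x)]
  refine Finset.sum_congr rfl fun j _ => ?_
  rw [inner_gradient_right, fderiv_slice_apply hf ht]
  simp

lemma norm_sq_gradient_slice [CompleteSpace E] (e : OrthonormalBasis ι ℝ E) {f : E × ℝ → ℝ} {x : E}
    {t : ℝ} (hf : DifferentiableWithinAt ℝ f (strip E T) (x, t)) (ht : t ∈ Icc 0 T) :
    ‖∇ (fun y => f (y, t)) x‖ ^ 2 = ∑ j, D[strip E T; (e j, 0)] f (x, t) ^ 2 := by
  simp only [← e.sum_sq_norm_inner_right, inner_gradient_right, fderiv_slice_apply hf ht]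
  simp

end InnerProductSpace

end Strip

section EuclideanSpace

variable {n : ℕ}

lemma laplacian_slice {T : ℝ} (hT : 0 < T) {U : EuclideanSpace ℝ (Fin n) × ℝ → ℝ}
    (hU : ContDiffOn ℝ 2 U (strip (EuclideanSpace ℝ (Fin n)) T)) (x : EuclideanSpace ℝ (Fin n))
    {t : ℝ} (ht : t ∈ Icc 0 T) :
    laplacian (fun y => U (y, t)) x = Δ[strip (EuclideanSpace ℝ (Fin n)) T;
      fun i => (EuclideanSpace.basisFun (Fin n) ℝ i, 0)] U (x, t) := by
  refine Finset.sum_congr rfl fun i _ => ?_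
  simp only [EuclideanSpace.basisFun_apply]
  simp_rw [fun y => fderiv_slice_apply (hU.differentiableOn two_ne_zero (y, t) ⟨trivial, ht⟩) ht]
  exact fderiv_slice_apply ((contDiffOn_dirDerivWithin (m := 1) hU (uniqueDiffOn_strip hT)
    (by norm_num) _).differentiableOn one_ne_zero (x, t) ⟨trivial, ht⟩) ht _

lemma norm_gradient_eq_norm_iteratedFDeriv_one {E : Type*} [NormedAddCommGroup E]
    [InnerProductSpace ℝ E] [CompleteSpace E] (f : E → ℝ) (x : E) :
    ‖∇ f x‖ = ‖iteratedFDeriv ℝ 1 f x‖ := by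
  rw [norm_iteratedFDeriv_one, gradient, LinearIsometryEquiv.norm_map]

lemma laplacian_le_mul_norm_iteratedFDeriv_two {f : EuclideanSpace ℝ (Fin n) → ℝ}
    {x : EuclideanSpace ℝ (Fin n)} (hf : ContDiffAt ℝ 2 f x) :
    laplacian f x ≤ n * ‖iteratedFDeriv ℝ 2 f x‖ := by
  have hterm (i : Fin n) : fderiv ℝ (fun y => fderiv ℝ f y (EuclideanSpace.single i 1)) x
      (EuclideanSpace.single i 1) ≤ ‖iteratedFDeriv ℝ 2 f x‖ := by
    have hd : DifferentiableAt ℝ (fderiv ℝ f) x :=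
      (hf.fderiv_right (m := 1) (by norm_num)).differentiableAt one_ne_zero
    rw [fderiv_clm_apply hd (differentiableAt_const _)]
    simpa [iteratedFDeriv_two_apply] using (le_abs_self _).trans
      ((iteratedFDeriv ℝ 2 f x).le_opNorm fun _ => EuclideanSpace.single i (1 : ℝ))
  simpa [laplacian] using Finset.sum_le_sum fun i (_ : i ∈ Finset.univ) => hterm i

theorem stmt_10_general (n : ℕ) (hn : 1 ≤ n) (ν T : ℝ) (hν : 0 ≤ ν) (hT : 0 < T)
    (u : EuclideanSpace ℝ (Fin n) → ℝ → ℝ)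
    (hsmooth : ContDiffOn ℝ 4 (fun p : EuclideanSpace ℝ (Fin n) × ℝ => u p.1 p.2)
      (univ ×ˢ Icc 0 T))
    (hgrad : ∃ M, ∀ x, ∀ t ∈ Icc (0 : ℝ) T, ‖∇ (fun y => u y t) x‖ ≤ M * (1 + ‖x‖))
    (hlap : ∃ B, ∀ x, ∀ t ∈ Icc (0 : ℝ) T, laplacian (fun y => u y t) x ≤ B)
    (hpde : ∀ x, ∀ t ∈ Icc (0 : ℝ) T, HasDerivWithinAt (u x)
      (-(1 / 2) * ‖∇ (fun y => u y t) x‖ ^ 2 + ν * laplacian (fun y => u y t) x) (Icc 0 T) t)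
    (C : ℝ) (hC : 0 < C) (hinit : ∀ x, laplacian (fun y => u y 0) x ≤ C) :
    ∀ x, ∀ t ∈ Icc (0 : ℝ) T, laplacian (fun y => u y t) x ≤ 1 / (C⁻¹ + t / n) := by
  obtain ⟨M, hM⟩ := hgrad
  obtain ⟨B, hB⟩ := hlap
  have : Nonempty (Fin n) := ⟨⟨0, hn⟩⟩
  set U : EuclideanSpace ℝ (Fin n) × ℝ → ℝ := fun p => u p.1 p.2
  set e : OrthonormalBasis (Fin n) ℝ (EuclideanSpace ℝ (Fin n)) := EuclideanSpace.basisFun (Fin n) ℝ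
  have hdiff : DifferentiableOn ℝ U (strip _ T) := hsmooth.differentiableOn four_ne_zero
  have hΔ (x) {t : ℝ} (ht : t ∈ Icc 0 T) :
      laplacian (fun y => u y t) x = Δ[strip _ T; fun i => (e i, 0)] U (x, t) :=
    laplacian_slice hT (hsmooth.of_le (by norm_num)) x ht
  have hgradU : ∀ p ∈ strip (EuclideanSpace ℝ (Fin n)) T,
      ‖∑ j, D[strip _ T; (e j, 0)] U p • e j‖ ≤ M * (1 + ‖p.1‖) := fun p hp => by
    rw [← gradient_slice_eq_sum e (hdiff p hp) hp.2]
    exact hM p.1 p.2 hp.2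
  have hHJ : ∀ p ∈ strip (EuclideanSpace ℝ (Fin n)) T, D[strip _ T; (0, 1)] U p =
      ν * Δ[strip _ T; fun i => (e i, 0)] U p - 1 / 2 * ∑ j, D[strip _ T; (e j, 0)] U p ^ 2 :=
    fun p hp => by
      rw [← norm_sq_gradient_slice e (hdiff p hp) hp.2, ← hΔ p.1 hp.2,
        (uniqueDiffOn_Icc hT p.2 hp.2).eq_deriv _ (hasDerivWithinAt_time (hdiff p hp))
          (hpde p.1 p.2 hp.2)]
      ring
  intro x t ht
  simpa [hΔ x ht] using dirLaplacianWithin_le_of_hamiltonJacobi hT hν hC hsmooth hgradU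
    (fun p hp => (hΔ p.1 hp.2).symm.trans_le (hB p.1 p.2 hp.2)) hHJ
    (fun x => (hΔ x ⟨le_rfl, hT.le⟩).symm.trans_le (hinit x)) (p := (x, t)) ⟨trivial, ht⟩

end EuclideanSpace

/-- Laplacian estimate for the viscous Hamilton–Jacobi equation: if `Δu(·,0) ≤ C_Lap`,
then `Δu(·,t) ≤ 1/(C_Lap⁻¹ + t/n)` for `t ∈ [0,T]`. -/
theorem stmt_10 (n : ℕ) (hn : 1 ≤ n) (β T : ℝ) (hβ : 0 < β) (hT : 0 < T)
    (u : EuclideanSpace ℝ (Fin n) → ℝ → ℝ)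
    (hsmooth : ContDiffOn ℝ (⊤ : ℕ∞)
      (fun p : EuclideanSpace ℝ (Fin n) × ℝ => u p.1 p.2)
      (Set.univ ×ˢ Set.Icc 0 T))
    (hbdd : ∃ M, ∀ x, ∀ t ∈ Set.Icc (0 : ℝ) T, ∀ i ≤ 4,
      ‖iteratedFDeriv ℝ i (fun y => u y t) x‖ ≤ M)
    (hpde : ∀ x, ∀ t ∈ Set.Icc (0 : ℝ) T,
      HasDerivAt (u x)
        (-(1/2) * ‖gradient (fun y => u y t) x‖ ^ 2
          + (β⁻¹ / 2) * laplacian (fun y => u y t) x) t)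
    (CLap : ℝ) (hCLap : 0 < CLap)
    (hinit : ∀ x, laplacian (fun y => u y 0) x ≤ CLap) :
    ∀ x, ∀ t ∈ Set.Icc (0 : ℝ) T,
      laplacian (fun y => u y t) x ≤ 1 / (CLap⁻¹ + t / n) := by
  obtain ⟨M, hM⟩ := hbdd
  have hM₀ : 0 ≤ M := (norm_nonneg _).trans (hM 0 0 ⟨le_rfl, hT.le⟩ 0 (by norm_num))
  refine stmt_10_general n hn (β⁻¹ / 2) T (by positivity) hT u (hsmooth.of_le (by norm_cast))
    ⟨M, fun x t ht => ?_⟩ ⟨n * M, fun x t ht => ?_⟩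
    (fun x t ht => (hpde x t ht).hasDerivWithinAt) CLap hCLap hinit
  · rw [norm_gradient_eq_norm_iteratedFDeriv_one]
    exact (hM x t ht 1 (by norm_num)).trans (le_mul_of_one_le_right hM₀ (by simp))
  · have hslice : ContDiff ℝ 2 fun y => u y t := contDiff_slice (hsmooth.of_le (by norm_cast)) ht
    calc laplacian (fun y => u y t) x
        ≤ n * ‖iteratedFDeriv ℝ 2 (fun y => u y t) x‖ :=
          laplacian_le_mul_norm_iteratedFDeriv_two hslice.contDiffAt
      _ ≤ n * M := by
          gcongr
          exact hM x t ht 2 (by norm_num)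
end
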